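/- arXiv:2106.00618 — 3 statements merged into one kernel-verified Lean document; each statement's English description precedes it below -/
import Mathlib

section
/- If there exists a locally countable, countably compact T₁ space of cardinality κ > ω, then the cofinality of ([κ]^ω, ⊆) equals κ, i.e., there is a family of κ countable subsets of κ such that every countable subset of κ is contained in one of them. -/
open Cardinal Set

/-!
Choosing a countable neighbourhood of each point gives a family of countable sets such that, by
countable compactness, every infinite countable set has an infinite intersection with some member.
A bijection between an infinite set and its finite sequences carries such a family over to the
sequences. An infinite set of initial segments of an enumeration of `A` mentions every element of
`A`, so replacing each member of the family by the set of all entries of its sequences gives a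
cofinal family of countable sets. Conversely, a cofinal family covers the underlying set, so on an
uncountable set it has at least as many members as the set has points.
-/

universe u v

/-- The poset `[α]^{≤ω}` of countable subsets of `α`. The finite sets are included, which does not
affect the cofinality when `α` is infinite. -/
abbrev CountableSubset (α : Type u) : Type u :=
  {s : Set α // s.Countable}

namespace CountableSubset

variable {α : Type u} {β : Type v}

/-- The direct image of a countable set, as an operation on countable subsets. -/
def map (f : α → β) (s : CountableSubset α) : CountableSubset β :=
  ⟨f '' s, s.2.image f⟩

/-- The set of all entries of a countable set of finite sequences; it decodes sets of finite
sequences into sets of points. -/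
def entries (s : CountableSubset (List α)) : CountableSubset α :=
  ⟨⋃ l ∈ s.1, {a | a ∈ l}, s.2.biUnion fun l _ => l.finite_toSet.countable⟩

theorem mem_entries {s : CountableSubset (List α)} {a : α} :
    a ∈ s.entries.1 ↔ ∃ l ∈ s.1, a ∈ l := by
  simp only [entries, mem_iUnion, mem_ofPred_eq, exists_prop]

theorem range_subset_entries_of_infinite {a : ℕ → α} {s : CountableSubset (List α)}
    (hs : (s.1 ∩ range fun n => (List.range n).map a).Infinite) :
    range a ⊆ s.entries.1 := by
  rintro _ ⟨n, rfl⟩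
  obtain ⟨_, ⟨hms, m, rfl⟩, hm⟩ :=
    hs.exists_notMem_finite ((finite_Iic n).image fun k => (List.range k).map a)
  have hnm : n < m := not_le.1 fun h => hm ⟨m, h, rfl⟩
  exact mem_entries.2 ⟨_, hms, List.mem_map_of_mem (List.mem_range.2 hnm)⟩

theorem mk_le_cof [Uncountable α] : #α ≤ Order.cof (CountableSubset α) := by
  refine Order.le_cof_iff.2 fun C hC => ?_
  have cover : ⋃ s ∈ C, s.1 = Set.univ := eq_univ_of_forall fun a =>
    let ⟨s, hs, has⟩ := hC ⟨{a}, countable_singleton a⟩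
    mem_biUnion hs (has rfl)
  have mk_le : #α ≤ #C * ℵ₀ := calc
    #α = #(⋃ s ∈ C, s.1) := by rw [cover, mk_univ]
    _ ≤ #C * ⨆ s : C, #s.1.1 := mk_biUnion_le _ _
    _ ≤ #C * ℵ₀ := by gcongr; exact ciSup_le' fun s => s.1.2.le_aleph0
  by_contra! hlt
  exact (mul_lt_of_lt aleph0_lt_mk.le hlt aleph0_lt_mk).not_ge mk_le

theorem exists_mk_eq_cof_and_forall_subset_range {f : α → β} (hf : f.Injective) :
    ∃ C : Set (Set β), lift.{u} #C = lift.{v} (Order.cof (CountableSubset α)) ∧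
      (∀ c ∈ C, c ⊆ range f ∧ c.Countable) ∧
      ∀ A ⊆ range f, A.Countable → ∃ c ∈ C, A ⊆ c := by
  obtain ⟨C, hC, hcard⟩ := Order.exists_cof_eq (CountableSubset α)
  have image_injective : (fun s : CountableSubset α => f '' s.1).Injective :=
    hf.image_injective.comp Subtype.val_injective
  refine ⟨(fun s => f '' s.1) '' C, ?_, ?_, fun A hA hAc => ?_⟩
  · rw [mk_image_eq_lift _ _ image_injective, hcard]
  · rintro _ ⟨s, -, rfl⟩
    exact ⟨image_subset_range f s, s.2.image f⟩
  · obtain ⟨s, hs, hAs⟩ := hC ⟨f ⁻¹' A, hAc.preimage hf⟩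
    refine ⟨f '' s.1, mem_image_of_mem _ hs, ?_⟩
    rw [← image_preimage_eq_of_subset hA]
    exact image_mono hAs

end CountableSubset

/-- An `ω`-hitting family in `[α]^{≤ω}`: every infinite countable set has an infinite
intersection with some member. -/
def IsOmegaHitting {α : Type u} (H : Set (CountableSubset α)) : Prop :=
  ∀ A : Set α, A.Countable → A.Infinite → ∃ s ∈ H, (s.1 ∩ A).Infinite

namespace IsOmegaHitting

variable {α : Type u} {β : Type v}

theorem image_map_equiv {H : Set (CountableSubset α)} (hH : IsOmegaHitting H) (e : α ≃ β) :
    IsOmegaHitting (CountableSubset.map e '' H) := by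
  intro A hAc hAi
  obtain ⟨s, hs, hsA⟩ := hH (e ⁻¹' A) (hAc.preimage e.injective)
    (hAi.preimage (by simp only [e.range_eq_univ, subset_univ]))
  refine ⟨CountableSubset.map e s, mem_image_of_mem _ hs, ?_⟩
  rw [CountableSubset.map, ← image_inter_preimage]
  exact hsA.image e.injective.injOn

theorem isCofinal_image_entries [Nonempty α] {H : Set (CountableSubset (List α))}
    (hH : IsOmegaHitting H) : IsCofinal (CountableSubset.entries '' H) := by
  rintro ⟨A, hA⟩
  obtain ⟨a, hAa⟩ := countable_iff_exists_subset_range.1 hA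
  have initialSegment_injective : (fun n => (List.range n).map a).Injective := fun m n h => by
    simpa only [List.length_map, List.length_range] using congrArg List.length h
  obtain ⟨s, hs, hsa⟩ :=
    hH _ (countable_range _) (infinite_range_of_injective initialSegment_injective)
  exact ⟨s.entries, mem_image_of_mem _ hs,
    hAa.trans (CountableSubset.range_subset_entries_of_infinite hsa)⟩

theorem cof_le [Infinite α] {H : Set (CountableSubset α)} (hH : IsOmegaHitting H) :
    Order.cof (CountableSubset α) ≤ #H := by
  obtain ⟨e⟩ : Nonempty (α ≃ List α) := Cardinal.eq.1 (mk_list_eq_mk α).symm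
  calc
    Order.cof (CountableSubset α) ≤ #(CountableSubset.entries '' (CountableSubset.map e '' H)) :=
      Order.cof_le (hH.image_map_equiv e).isCofinal_image_entries
    _ ≤ #(CountableSubset.map e '' H) := mk_image_le
    _ ≤ #H := mk_image_le

end IsOmegaHitting

section Topology

variable {X : Type u} [TopologicalSpace X]

theorem exists_isOmegaHitting_mk_le (hloc : ∀ x : X, ∃ U ∈ nhds x, U.Countable)
    (hcc : ∀ A : Set X, A.Countable → A.Infinite → ∃ x : X, ∀ U ∈ nhds x, (U ∩ A).Infinite) :
    ∃ H : Set (CountableSubset X), IsOmegaHitting H ∧ #H ≤ #X := by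
  choose U hU hUc using hloc
  refine ⟨range fun x => ⟨U x, hUc x⟩, fun A hAc hAi => ?_, mk_range_le⟩
  obtain ⟨x, hx⟩ := hcc A hAc hAi
  exact ⟨_, mem_range_self x, hx (U x) (hU x)⟩

theorem cof_countableSubset_eq_mk [Uncountable X] (hloc : ∀ x : X, ∃ U ∈ nhds x, U.Countable)
    (hcc : ∀ A : Set X, A.Countable → A.Infinite → ∃ x : X, ∀ U ∈ nhds x, (U ∩ A).Infinite) :
    Order.cof (CountableSubset X) = #X := by
  obtain ⟨H, hH, hHX⟩ := exists_isOmegaHitting_mk_le hloc hcc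
  exact (hH.cof_le.trans hHX).antisymm CountableSubset.mk_le_cof

end Topology

theorem exists_injective_range_eq_Iio_ord (α : Type u) :
    ∃ f : α → Ordinal.{u}, f.Injective ∧ range f = Iio (#α).ord := by
  obtain ⟨e⟩ : Nonempty (α ≃ Iio (#α).ord) := by
    rw [← lift_mk_eq', mk_Iio_ordinal, card_ord, lift_lift]
  exact ⟨Subtype.val ∘ e, Subtype.val_injective.comp e.injective, by
    rw [e.surjective.range_comp, Subtype.range_coe]⟩

theorem stmt11_general (κ : Cardinal.{u}) (hκ : ℵ₀ < κ)
    (X : Type u) [TopologicalSpace X] (hcard : #X = κ)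
    (hloc : ∀ x : X, ∃ U ∈ nhds x, U.Countable)
    (hcc : ∀ A : Set X, A.Countable → A.Infinite →
      ∃ x : X, ∀ U ∈ nhds x, (U ∩ A).Infinite) :
    ∃ C : Set (Set Ordinal.{u}),
      #C = Cardinal.lift.{u + 1} κ ∧
      (∀ c ∈ C, c ⊆ Set.Iio κ.ord ∧ c.Countable) ∧
      ∀ A : Set Ordinal, A ⊆ Set.Iio κ.ord → A.Countable →
        ∃ c ∈ C, A ⊆ c := by
  subst hcard
  have : Uncountable X := aleph0_lt_mk_iff.1 hκ
  obtain ⟨f, hf, hrange⟩ := exists_injective_range_eq_Iio_ord X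
  obtain ⟨C, hC, hcountable, hcofinal⟩ :=
    CountableSubset.exists_mk_eq_cof_and_forall_subset_range hf
  rw [cof_countableSubset_eq_mk hloc hcc, lift_id'.{u, u + 1}] at hC
  rw [hrange] at hcountable hcofinal
  exact ⟨C, hC, hcountable, hcofinal⟩

/-- if there is a locally countable, countably compact T₁ space of
cardinality `κ > ω`, then `cof([κ]^ω, ⊆) = κ`: there is a family of `κ` many
countable subsets of `κ` such that every countable subset of `κ` is contained in
one of them. -/
theorem stmt11 (κ : Cardinal.{0}) (hκ : ℵ₀ < κ)
    (X : Type) [TopologicalSpace X] [T1Space X] (hcard : #X = κ)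
    (hloc : ∀ x : X, ∃ U ∈ nhds x, U.Countable)
    (hcc : ∀ A : Set X, A.Countable → A.Infinite →
      ∃ x : X, ∀ U ∈ nhds x, (U ∩ A).Infinite) :
    ∃ C : Set (Set Ordinal.{0}),
      #C = Cardinal.lift.{1} κ ∧
      (∀ c ∈ C, c ⊆ Set.Iio κ.ord ∧ c.Countable) ∧
      ∀ A : Set Ordinal, A ⊆ Set.Iio κ.ord → A.Countable →
        ∃ c ∈ C, A ⊆ c :=
  stmt11_general κ hκ X hcard hloc hcc
end

section
/- If κ is a cardinal with ω ≤ κ = κ^ω ≤ 2^𝔠, then there exists a locally countable SAU space of cardinality κ. In particular (κ = 2^𝔠), there is in ZFC a locally countable SAU space of cardinality 2^𝔠. -/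
open Cardinal Set

/-- A SAU (strongly anti-Urysohn) space. -/
def IsSAU (X : Type*) [TopologicalSpace X] : Prop :=
  T2Space X ∧
    (∃ x y : X, x ≠ y ∧ ¬IsOpen ({x} : Set X) ∧ ¬IsOpen ({y} : Set X)) ∧
    ∀ F G : Set X, IsClosed F → IsClosed G → F.Infinite → G.Infinite →
      (F ∩ G).Nonempty

/-!
Each `x : X` receives a filter `l x`, the supremum of two weak P-point ultrafilters, and `U` is
declared open when `U ∈ l x` for all `x ∈ U`. If the two ultrafilters at `x` contain the terms of
the `x`-th pair of countably infinite sets, then `x` belongs to every closed set that contains one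
of these terms, so that any two infinite closed sets meet. Countable families of distinct weak
P-points have pairwise disjoint representatives; spreading these along the points reachable from
`x` and from `y` gives disjoint countable open neighbourhoods of `x` and `y`.

Distinct choices are possible because every infinite set belongs to `2 ^ 𝔠` weak P-points. This is
Kunen's theorem: from a matrix of sets on a countable set, independent and linked, a recursion of
length `𝔠` produces ultrafilters that are `𝔠`-OK, spending finitely many rows on each sequence of
sets, and `𝔠` further rows are set aside to make `2 ^ 𝔠` of these ultrafilters distinct.
-/

open Filter Function Topology

universe u v

section Cardinality

theorem exists_mk_eq_and_mk_compl_eq (α : Type*) [Infinite α] :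
    ∃ R : Set α, #R = #α ∧ #↥Rᶜ = #α := by
  obtain ⟨R, R', hunion, hdisj, hcard⟩ :=
    (infinite_univ (α := α)).exists_union_disjoint_cardinal_eq_of_infinite
  obtain rfl : Rᶜ = R' := (IsCompl.of_eq hdisj.eq_bot hunion).compl_eq
  have hsum : #R + #R = #α := (congrArg (#R + ·) hcard).trans (mk_sum_compl R)
  have hR : #R = #α := (mk_set_le R).eq_of_not_lt fun hlt =>
    (add_lt_of_lt (aleph0_le_mk α) hlt hlt).ne hsum
  exact ⟨R, hR, hcard ▸ hR⟩

theorem exists_surjective_natEmbedding_pair {X : Type u} [Infinite X] (hX : #X ^ ℵ₀ = #X) :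
    ∃ e : X → Bool → ℕ ↪ X, Surjective e := by
  have hemb : #(ℕ ↪ X) = #X := by
    rw [mk_embedding_eq_arrow_of_lift_le (by simp), mk_arrow]
    simpa using hX
  have hcard : #(Bool → ℕ ↪ X) = #X := by
    rw [mk_congr (Equiv.boolArrowEquivProd _), ← mul_def, hemb, mul_eq_self (aleph0_le_mk X)]
  obtain ⟨e⟩ := Cardinal.eq.1 hcard
  exact ⟨e.symm, e.symm.surjective⟩

end Cardinality

section TransfiniteRecursion

theorem exists_forall_of_wellFoundedLT {K α : Type*} [Preorder K] [WellFoundedLT K] [Nonempty α]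
    (r : ∀ τ : K, (Iio τ → α) → α → Prop)
    (hr : ∀ (τ : K) (f : K → α), (∀ σ < τ, r σ (fun ρ => f ρ) (f σ)) →
      ∃ y, r τ (fun σ => f σ) y) :
    ∃ f : K → α, ∀ τ, r τ (fun σ => f σ) (f τ) := by
  let f : K → α := wellFounded_lt.fix fun τ g => Classical.epsilon (r τ fun σ => g σ.1 σ.2)
  have hf (τ : K) : f τ = Classical.epsilon (r τ fun σ => f σ) := WellFounded.fix_eq _ _ _
  refine ⟨f, fun τ => ?_⟩
  induction τ using WellFoundedLT.induction with
  | ind τ ih =>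
    rw [hf]
    exact Classical.epsilon_spec (hr τ f ih)

theorem exists_injective_forall_mem {ι α : Type u} (W : ι → Set α) (hW : ∀ i, #ι ≤ #(W i)) :
    ∃ f : ι → α, Injective f ∧ ∀ i, f i ∈ W i := by
  rcases isEmpty_or_nonempty ι with _ | ⟨⟨i₀⟩⟩
  · exact ⟨isEmptyElim, injective_of_subsingleton _, isEmptyElim⟩
  have : Nonempty α := by
    have : #(W i₀) ≠ 0 := (pos_iff_ne_zero.2 (mk_ne_zero_iff.2 ⟨i₀⟩)).trans_le (hW i₀) |>.ne'
    exact (mk_ne_zero_iff.1 this).map Subtype.val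
  obtain ⟨_, _, hι⟩ := exists_ord_eq_type_lt ι
  obtain ⟨f, hf⟩ := exists_forall_of_wellFoundedLT
    (fun i (g : Iio i → α) y => y ∈ W i ∧ y ∉ range g) fun i g _ => by
      have hlt : #(range fun j : Iio i => g j) < #(W i) :=
        mk_range_le.trans_lt ((mk_Iio_lt i hι).trans_le (hW i))
      simpa only [not_subset] using mt mk_le_mk_of_subset hlt.not_ge
  refine ⟨f, fun i j hij => ?_, fun i => (hf i).1⟩
  by_contra hne
  rcases lt_or_gt_of_ne hne with h | h
  · exact (hf j).2 ⟨⟨i, h⟩, hij⟩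
  · exact (hf i).2 ⟨⟨j, h⟩, hij.symm⟩

theorem nonempty_inter_iInter_of_finite_sdiff {K ι : Type u} [Preorder K] [WellFoundedLT K]
    {R : Set ι} (hR : ℵ₀ < #R) {Q : K → Set ι} {τ : K} (hτ : #(Iio τ) < #R)
    (hQ : ∀ σ < τ, ((R ∩ ⋂ ρ : Iio σ, Q ρ) \ Q σ).Finite) :
    (R ∩ ⋂ σ : Iio τ, Q σ).Nonempty := by
  by_contra hempty
  have hcover : R ⊆ ⋃ σ : Iio τ, (R ∩ ⋂ ρ : Iio σ.1, Q ρ) \ Q σ := by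
    intro i hi
    have hlost : ∃ σ, σ < τ ∧ i ∉ Q σ := by
      by_contra! h
      exact hempty ⟨i, hi, mem_iInter.2 fun σ => h σ σ.2⟩
    obtain ⟨σ, ⟨hστ, hiσ⟩, hmin⟩ := wellFounded_lt.has_min {σ | σ < τ ∧ i ∉ Q σ} hlost
    refine mem_iUnion.2 ⟨⟨σ, hστ⟩, ⟨hi, mem_iInter.2 fun ρ => ?_⟩, hiσ⟩
    by_contra hiρ
    exact hmin ρ ⟨ρ.2.trans hστ, hiρ⟩ ρ.2
  have hsup : ⨆ σ : Iio τ, #↑((R ∩ ⋂ ρ : Iio σ.1, Q ρ) \ Q σ) ≤ ℵ₀ :=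
    ciSup_le' fun σ => (lt_aleph0_iff_set_finite.2 (hQ σ σ.2)).le
  have : #R < #R := calc
    #R ≤ #(Iio τ) * ⨆ σ : Iio τ, #↑((R ∩ ⋂ ρ : Iio σ.1, Q ρ) \ Q σ) :=
      (mk_le_mk_of_subset hcover).trans (mk_iUnion_le _)
    _ ≤ #(Iio τ) * ℵ₀ := by gcongr
    _ < #R := mul_lt_of_lt hR.le hτ hR
  exact this.false

end TransfiniteRecursion

section LinkedFamily

variable {X ι κ : Type*}

/-- A matrix `L` of sets with rows `ι` and columns `κ` in Kunen's sense: in each row, the levels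
increase and more than `m` entries of level `m` have finite intersection. -/
structure IsLinkedFamily (L : ι → κ → ℕ → Set X) : Prop where
  mono (i : ι) (α : κ) : Monotone (L i α)
  finite_iInter (i : ι) {a : Finset κ} {m : ℕ} (hm : m < a.card) : (⋂ α ∈ a, L i α m).Finite

/-- The intersection, over the rows `i ∈ s`, of the entries in the columns `α ∈ a i`, each taken
at the level `(a i).card`, the least one at which their intersection can be infinite. -/
def cell (L : ι → κ → ℕ → Set X) (s : Finset ι) (a : ι → Finset κ) : Set X :=
  ⋂ i ∈ s, ⋂ α ∈ a i, L i α (a i).card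

/-- Kunen's independence of the matrix `L` modulo the filter `F`, required only of the rows that
lie in `R`. -/
def IsIndependentOn (L : ι → κ → ℕ → Set X) (F : Filter X) (R : Set ι) : Prop :=
  ∀ s : Finset ι, ↑s ⊆ R → ∀ a : ι → Finset κ, ∃ᶠ p in F, p ∈ cell L s a

variable {L : ι → κ → ℕ → Set X} {F : Filter X} {R : Set ι}

theorem mem_cell {s : Finset ι} {a : ι → Finset κ} {p : X} :
    p ∈ cell L s a ↔ ∀ i ∈ s, ∀ α ∈ a i, p ∈ L i α (a i).card := by
  simp only [cell, mem_iInter]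

namespace IsIndependentOn

theorem neBot (h : IsIndependentOn L F R) : F.NeBot :=
  (frequently_true_iff_neBot F).1 ((h ∅ (by simp) fun _ => ∅).mono fun _ _ => trivial)

theorem mono {F' : Filter X} {R' : Set ι} (h : IsIndependentOn L F R) (hF : F ≤ F')
    (hR : R' ⊆ R) : IsIndependentOn L F' R' :=
  fun s hs a => (h s (hs.trans hR) a).filter_mono hF

theorem iInf {J : Type*} [Nonempty J] {F : J → Filter X} (hdir : Directed (· ≥ ·) F)
    (h : ∀ j, IsIndependentOn L (F j) R) : IsIndependentOn L (⨅ j, F j) R := by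
  intro s hs a hcell
  obtain ⟨j, hj⟩ := (mem_iInf_of_directed hdir _).1 hcell
  exact h j s hs a hj

theorem inf_iInf {J : Type*} {F₀ : Filter X} {F : J → Filter X} {R₀ : Set ι} {Q : J → Set ι}
    (h₀ : IsIndependentOn L F₀ R₀) (hdir : Directed (· ≥ ·) F) (hle : ∀ j, F j ≤ F₀)
    (h : ∀ j, IsIndependentOn L (F j) (Q j)) :
    IsIndependentOn L (F₀ ⊓ ⨅ j, F j) (R₀ ∩ ⋂ j, Q j) := by
  rcases isEmpty_or_nonempty J with _ | hJ
  · simpa using h₀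
  · obtain ⟨j⟩ := id hJ
    rw [inf_eq_right.2 ((iInf_le F j).trans (hle j))]
    exact .iInf hdir fun j => (h j).mono le_rfl (inter_subset_right.trans (iInter_subset Q j))

theorem inf_principal_cell (h : IsIndependentOn L F R) {t : Finset ι} (ht : ↑t ⊆ R)
    (b : ι → Finset κ) : IsIndependentOn L (F ⊓ 𝓟 (cell L t b)) (R \ t) := by
  classical
  intro s hs a
  have hst : ∀ i ∈ s, i ∉ t := fun i hi => (hs hi).2
  have hunion := h (t ∪ s) (by simpa using ⟨ht, hs.trans sdiff_subset⟩)
    fun i => if i ∈ t then b i else a i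
  refine frequently_inf_principal.2 (hunion.mono fun p hp => ?_)
  rw [mem_cell] at hp
  refine ⟨mem_cell.2 fun i hi => ?_, mem_cell.2 fun i hi => ?_⟩
  · simpa [hi] using hp i (Finset.mem_union_left s hi)
  · simpa [hst i hi] using hp i (Finset.mem_union_right t hi)

end IsIndependentOn

end LinkedFamily

section OKPoint

variable {X ι κ : Type*}

/-- `V` witnesses Kunen's `κ`-OK property for the sequence `U`. Since `U` starts at `0`, it is the
intersections of at least `n + 1` of the sets `V α` that are almost contained in `U n`. -/
def IsOKRefinement (V : κ → Set X) (U : ℕ → Set X) : Prop :=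
  ∀ (a : Finset κ) (n : ℕ), n < a.card → ((⋂ α ∈ a, V α) \ U n).Finite

/-- The instance of Kunen's `κ`-OK property of `u` for the single sequence `U`. -/
def IsOKAt (κ : Type*) (u : Ultrafilter X) (U : ℕ → Set X) : Prop :=
  (∀ n, U n ∈ u) → ∃ V : κ → Set X, (∀ α, V α ∈ u) ∧ IsOKRefinement V U

variable {L : ι → κ → ℕ → Set X} {F : Filter X} {R : Set ι} {i : ι} {U : ℕ → Set X}

/-- The points which lie in `L i α k` as soon as `U k` is the first of the sets `U 0, U 1, …` that
they miss; in Kunen's construction these sets refine `U`. -/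
def firstExit (L : ι → κ → ℕ → Set X) (i : ι) (U : ℕ → Set X) (α : κ) : Set X :=
  {p | ∀ k, (∀ j < k, p ∈ U j) → p ∉ U k → p ∈ L i α k}

theorem IsLinkedFamily.isOKRefinement_firstExit (hL : IsLinkedFamily L) (i : ι) (U : ℕ → Set X) :
    IsOKRefinement (firstExit L i U) U := by
  classical
  intro a n hn
  refine ((finite_Iio a.card).biUnion fun k hk => hL.finite_iInter i hk).subset ?_
  rintro p ⟨hpV, hpU⟩
  have hex : ∃ k, p ∉ U k := ⟨n, hpU⟩
  have hk : Nat.find hex < a.card := (Nat.find_min' hex hpU).trans_lt hn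
  refine mem_biUnion hk (mem_iInter₂.2 fun α hα => ?_)
  exact mem_iInter₂.1 hpV α hα _ (fun j hj => not_not.1 (Nat.find_min hex hj)) (Nat.find_spec hex)

theorem IsLinkedFamily.cell_inter_subset_firstExit (hL : IsLinkedFamily L) (b : Finset κ) :
    cell L {i} (fun _ => b) ∩ ⋂ k ∈ Iio b.card, U k ⊆ ⋂ α ∈ b, firstExit L i U α := by
  rintro p ⟨hpL, hpU⟩
  refine mem_iInter₂.2 fun α hα k _ hpk => ?_
  have hk : b.card ≤ k := not_lt.1 fun hlt => hpk (mem_iInter₂.1 hpU k hlt)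
  exact hL.mono i α hk (mem_cell.1 hpL i (Finset.mem_singleton_self i) α hα)

theorem IsIndependentOn.exists_le_isOKRefinement (hL : IsLinkedFamily L)
    (h : IsIndependentOn L F R) (hi : i ∈ R) (hU : ∀ n, U n ∈ F) :
    ∃ G ≤ F, IsIndependentOn L G (R \ {i}) ∧
      ∃ V : κ → Set X, (∀ α, V α ∈ G) ∧ IsOKRefinement V U := by
  classical
  let V := firstExit L i U
  let G (b : Finset κ) : Filter X := F ⊓ 𝓟 (⋂ α ∈ b, V α)
  have hG : Antitone G := fun b c hbc => by
    refine inf_le_inf_left F (principal_mono.2 ?_)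
    exact biInter_subset_biInter_left hbc
  have hdir : Directed (· ≥ ·) G := fun b c =>
    ⟨b ∪ c, hG Finset.subset_union_left, hG Finset.subset_union_right⟩
  have hind (b : Finset κ) : IsIndependentOn L (G b) (R \ {i}) := by
    have hcell := h.inf_principal_cell (t := {i}) (by simpa using hi) fun _ => b
    refine hcell.mono (le_inf inf_le_left (le_principal_iff.2 ?_)) (by simp)
    refine mem_of_superset ?_ (hL.cell_inter_subset_firstExit b)
    exact inter_mem (mem_inf_of_right (mem_principal_self _))
      (mem_inf_of_left ((biInter_mem (finite_Iio _)).2 fun k _ => hU k))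
  refine ⟨⨅ b, G b, (iInf_le G ∅).trans inf_le_left, .iInf hdir hind, V, fun α => ?_,
    hL.isOKRefinement_firstExit i U⟩
  exact mem_iInf_of_mem {α} (mem_inf_of_right (by simp))

/-- Either the matrix stays independent after adding all the sets `U n` to `F`, and one row makes
`U` refinable, or some cell is incompatible with them, and adding that cell prevents every
ultrafilter above `F` from containing all the `U n`. -/
theorem IsIndependentOn.exists_le_isOKAt (hL : IsLinkedFamily L) (h : IsIndependentOn L F R)
    (hR : R.Nonempty) (U : ℕ → Set X) :
    ∃ G ≤ F, ∃ Q ⊆ R, (R \ Q).Finite ∧ IsIndependentOn L G Q ∧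
      ∀ u : Ultrafilter X, ↑u ≤ G → IsOKAt κ u U := by
  by_cases hind : IsIndependentOn L (F ⊓ ⨅ n, 𝓟 (U n)) R
  · obtain ⟨i, hi⟩ := hR
    obtain ⟨G, hGF, hG, V, hVG, hV⟩ := hind.exists_le_isOKRefinement hL hi fun n =>
      mem_inf_of_right (mem_iInf_of_mem n (mem_principal_self (U n)))
    refine ⟨G, hGF.trans inf_le_left, R \ {i}, sdiff_subset, ?_, hG, fun u hu _ =>
      ⟨V, fun α => hu (hVG α), hV⟩⟩
    exact (finite_singleton i).subset (by simp)
  · simp only [IsIndependentOn, not_forall, not_frequently] at hind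
    obtain ⟨s, hs, a, hsa⟩ := hind
    refine ⟨F ⊓ 𝓟 (cell L s a), inf_le_left, R \ s, sdiff_subset, ?_, h.inf_principal_cell hs a,
      fun u hu hU => ?_⟩
    · exact s.finite_toSet.subset (by simp)
    · have huU : (u : Filter X) ≤ F ⊓ ⨅ n, 𝓟 (U n) :=
        le_inf (hu.trans inf_le_left) (le_iInf fun n => le_principal_iff.2 (hU n))
      have hcell : cell L s a ∈ u := le_principal_iff.1 (hu.trans inf_le_right)
      exact (Ultrafilter.compl_mem_iff_notMem.1 (huU hsa) hcell).elim

end OKPoint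

section Kunen

theorem IsIndependentOn.exists_ultrafilter_le {X ι κ J : Type*} {L : ι → κ → ℕ → Set X}
    {F₀ : Filter X} {F : J → Filter X} {R₀ : Set ι} {Q : J → Set ι} (h₀ : IsIndependentOn L F₀ R₀)
    (hdir : Directed (· ≥ ·) F) (hle : ∀ j, F j ≤ F₀) (h : ∀ j, IsIndependentOn L (F j) (Q j)) :
    ∃ u : Ultrafilter X, ↑u ≤ F₀ ∧ ∀ j, ↑u ≤ F j := by
  have : (F₀ ⊓ ⨅ j, F j).NeBot := (h₀.inf_iInf hdir hle h).neBot
  have hu := Ultrafilter.of_le (F₀ ⊓ ⨅ j, F j)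
  exact ⟨_, hu.trans inf_le_left, fun j => hu.trans (inf_le_right.trans (iInf_le F j))⟩

theorem IsIndependentOn.exists_forall_isOKAt {X ι K : Type u} {κ : Type v}
    {L : ι → κ → ℕ → Set X} (hL : IsLinkedFamily L) {F : Filter X} {R : Set ι}
    (h : IsIndependentOn L F R) (hR : ℵ₀ < #R) (hK : #K ≤ #R) (U : K → ℕ → Set X) :
    ∃ u : Ultrafilter X, ↑u ≤ F ∧ ∀ τ, IsOKAt κ u (U τ) := by
  obtain ⟨_, _, hord⟩ := exists_ord_eq_type_lt K
  let stage (τ : K) (f : Iio τ → Filter X × Set ι) : Filter X × Set ι :=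
    (F ⊓ ⨅ σ, (f σ).1, R ∩ ⋂ σ, (f σ).2)
  let r (τ : K) (f : Iio τ → Filter X × Set ι) (y : Filter X × Set ι) : Prop :=
    y ≤ stage τ f ∧ ((stage τ f).2 \ y.2).Finite ∧ IsIndependentOn L y.1 y.2 ∧
      ∀ u : Ultrafilter X, ↑u ≤ y.1 → IsOKAt κ u (U τ)
  have hanti {f : K → Filter X × Set ι} {ρ σ : K} (hσ : r σ (fun ρ => f ρ) (f σ)) (hρσ : ρ ≤ σ) :
      (f σ).1 ≤ (f ρ).1 := by
    rcases hρσ.eq_or_lt with rfl | hlt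
    · rfl
    · exact hσ.1.1.trans (inf_le_right.trans (iInf_le (fun ρ : Iio σ => (f ρ).1) ⟨ρ, hlt⟩))
  obtain ⟨f, hf⟩ := exists_forall_of_wellFoundedLT r fun τ f hf => by
    have hind : IsIndependentOn L (F ⊓ ⨅ σ : Iio τ, (f σ).1) (R ∩ ⋂ σ : Iio τ, (f σ).2) :=
      h.inf_iInf (directed_of_isDirected_le fun ρ σ hρσ => hanti (hf σ σ.2) hρσ)
        (fun σ => (hf σ σ.2).1.1.trans inf_le_left) fun σ => (hf σ σ.2).2.2.1
    have hne : (R ∩ ⋂ σ : Iio τ, (f σ).2).Nonempty :=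
      nonempty_inter_iInter_of_finite_sdiff (Q := fun σ => (f σ).2) hR
        ((mk_Iio_lt τ hord).trans_le hK) fun σ hσ => (hf σ hσ).2.1
    obtain ⟨G, hGF, Q, hQR, hfin, hGQ, hOK⟩ := hind.exists_le_isOKAt hL hne (U τ)
    exact ⟨(G, Q), ⟨hGF, hQR⟩, hfin, hGQ, hOK⟩
  obtain ⟨u, huF, hu⟩ := h.exists_ultrafilter_le
    (directed_of_isDirected_le fun ρ σ hρσ => hanti (hf σ) hρσ)
    (fun τ => (hf τ).1.1.trans inf_le_left) fun τ => (hf τ).2.2.1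
  exact ⟨u, huF, fun τ => (hf τ).2.2.2 u (hu τ)⟩

/-- Kunen's `κ`-OK points. -/
def IsOK (κ : Type*) {X : Type*} (u : Ultrafilter X) : Prop :=
  ∀ U : ℕ → Set X, IsOKAt κ u U

theorem IsIndependentOn.exists_isOK {X ι : Type u} {κ : Type v} [Countable X]
    {L : ι → κ → ℕ → Set X} (hL : IsLinkedFamily L) {F : Filter X} {R : Set ι}
    (h : IsIndependentOn L F R) (hR : 𝔠 ≤ #R) : ∃ u : Ultrafilter X, ↑u ≤ F ∧ IsOK κ u := by
  have hseq : #(ℕ → Set X) ≤ 𝔠 := calc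
    #(ℕ → Set X) = 2 ^ (#X * ℵ₀) := by simp [power_mul]
    _ ≤ 2 ^ (ℵ₀ * ℵ₀ : Cardinal.{u}) :=
      power_le_power_left two_ne_zero (mul_le_mul' mk_le_aleph0 le_rfl)
    _ = 𝔠 := by simp
  exact h.exists_forall_isOKAt hL (aleph0_lt_continuum.trans_le hR) (hseq.trans hR) id

/-- The filter generated by the cofinite sets and, for each row outside `R`, the first level of the
entry chosen by `y`; Kunen distinguishes his `2 ^ 𝔠` points by these filters. -/
def columnFilter {X ι κ : Type*} (L : ι → κ → ℕ → Set X) (R : Set ι) (y : ↥Rᶜ → κ) : Filter X :=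
  cofinite ⊓ ⨅ i : ↥Rᶜ, 𝓟 (L i (y i) 1)

theorem isIndependentOn_columnFilter {X ι κ : Type*} {L : ι → κ → ℕ → Set X}
    (h : IsIndependentOn L cofinite univ) (R : Set ι) (y : ↥Rᶜ → κ) :
    IsIndependentOn L (columnFilter L R y) R := by
  classical
  let G (t : Finset ↥Rᶜ) : Filter X := cofinite ⊓ ⨅ i ∈ t, 𝓟 (L i (y i) 1)
  have hG : Antitone G := fun t t' htt' => inf_le_inf_left _ (biInf_mono fun _ hi => htt' hi)
  have hind (t : Finset ↥Rᶜ) : IsIndependentOn L (G t) R := by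
    let b (i : ι) : Finset κ := if hi : i ∈ Rᶜ then {y ⟨i, hi⟩} else ∅
    refine (h.inf_principal_cell (t := t.map (.subtype _)) (subset_univ _) b).mono ?_ ?_
    · refine inf_le_inf_left _ (le_iInf₂ fun i hi => principal_mono.2 fun p hp => ?_)
      have hb : b i = {y i} := dif_pos i.2
      simpa [hb] using mem_cell.1 hp i (Finset.mem_map_of_mem _ hi)
    · simp +contextual [subset_def]
  rw [columnFilter, iInf_eq_iInf_finset, inf_iInf]
  exact .iInf (directed_of_isDirected_le hG) hind

theorem exists_injective_isOK {X ι : Type u} {κ : Type v} [Countable X] {L : ι → κ → ℕ → Set X}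
    (hL : IsLinkedFamily L) (h : IsIndependentOn L cofinite univ) {R : Set ι} (hR : 𝔠 ≤ #R) :
    ∃ u : (↥Rᶜ → κ) → Ultrafilter X,
      Injective u ∧ ∀ y, (u y : Filter X) ≤ cofinite ∧ IsOK κ (u y) := by
  classical
  choose u hu hOK using fun y => (isIndependentOn_columnFilter h R y).exists_isOK hL hR
  refine ⟨u, fun y y' hyy' => ?_, fun y => ⟨(hu y).trans inf_le_left, hOK y⟩⟩
  by_contra hne
  obtain ⟨i, hi⟩ := ne_iff.1 hne
  have hmem (y) : L i (y i) 1 ∈ u y :=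
    hu y (mem_inf_of_right (mem_iInf_of_mem i (mem_principal_self _)))
  have hfin : (L i (y i) 1 ∩ L i (y' i) 1).Finite := by
    simpa using hL.finite_iInter i (a := {y i, y' i}) (m := 1) (by simp [Finset.card_pair hi])
  have hcofin := (hu y).trans inf_le_left hfin.compl_mem_cofinite
  exact (u y).compl_mem_iff_notMem.1 hcofin (inter_mem (hmem y) (hyy' ▸ hmem y'))

end Kunen

section BinaryMatrix

/-- A finite approximation, of some length `n`, to a set-valued function on the Cantor space. -/
abbrev BinaryApprox : Type := Σ n : ℕ, ((Fin n → Bool) → Finset (Fin n → Bool))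

/-- The first `n` digits of a binary sequence. -/
def truncate (n : ℕ) (x : ℕ → Bool) : Fin n → Bool := fun k => x k

/-- Kunen's matrix with `𝔠` rows and `𝔠` columns on a countable set: row `x`, column `y`, level `m`
consists of the approximations whose value at `x` contains `y` and has at most `m` elements. -/
def binaryMatrix (x y : ℕ → Bool) (m : ℕ) : Set BinaryApprox :=
  {p | (p.2 (truncate p.1 x)).card ≤ m ∧ truncate p.1 y ∈ p.2 (truncate p.1 x)}

theorem eventually_injOn_truncate (s : Finset (ℕ → Bool)) :
    ∀ᶠ n in atTop, InjOn (truncate n) s := by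
  simp only [InjOn, Finset.mem_coe, Filter.eventually_all_finset]
  intro x _ y _
  by_cases hxy : x = y
  · exact .of_forall fun _ _ => hxy
  obtain ⟨k, hk⟩ := ne_iff.1 hxy
  filter_upwards [eventually_gt_atTop k] with n hn heq
  exact (hk (congrFun heq ⟨k, hn⟩)).elim

theorem tendsto_binaryApprox_fst : Tendsto (Sigma.fst : BinaryApprox → ℕ) cofinite atTop := by
  rw [← Nat.cofinite_eq_atTop]
  refine .cofinite_of_finite_preimage_singleton fun n => ?_
  refine (finite_range (Sigma.mk n)).subset ?_
  rintro ⟨_, p⟩ rfl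
  exact mem_range_self p

theorem isLinkedFamily_binaryMatrix : IsLinkedFamily binaryMatrix where
  mono x y _ _ hmm' _ hp := ⟨hp.1.trans hmm', hp.2⟩
  finite_iInter x a m hm := by
    have hinj := tendsto_binaryApprox_fst.eventually (eventually_injOn_truncate a)
    refine hinj.subset fun p hp hinjp => ?_
    obtain ⟨y, hy⟩ := Finset.card_pos.1 (m.zero_le.trans_lt hm)
    have himage : a.image (truncate p.1) ⊆ p.2 (truncate p.1 x) :=
      Finset.image_subset_iff.2 fun y hy => (mem_iInter₂.1 hp y hy).2
    have := Finset.card_le_card himage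
    rw [Finset.card_image_of_injOn hinjp] at this
    exact (this.trans (mem_iInter₂.1 hp y hy).1).not_gt hm

theorem isIndependentOn_binaryMatrix : IsIndependentOn binaryMatrix cofinite univ := by
  intro s _ a
  rw [frequently_cofinite_iff_infinite]
  obtain ⟨N, hN⟩ := eventually_atTop.1 (eventually_injOn_truncate s)
  refine Infinite.of_image Sigma.fst ((Ici_infinite N).mono fun n hn => ?_)
  have : ∃ p : (Fin n → Bool) → Finset (Fin n → Bool),
      ∀ x ∈ s, p (truncate n x) = (a x).image (truncate n) := by
    refine ⟨fun t => (a (invFunOn (truncate n) s t)).image (truncate n), fun x hx => ?_⟩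
    exact congrArg _ (congrArg a ((hN n hn).leftInvOn_invFunOn hx))
  obtain ⟨p, hp⟩ := this
  refine ⟨⟨n, p⟩, mem_cell.2 fun x hx y hy => ?_, rfl⟩
  simp only [binaryMatrix, mem_ofPred_eq, hp x hx]
  exact ⟨Finset.card_image_le, Finset.mem_image_of_mem _ hy⟩

end BinaryMatrix

section WeakPPoint

variable {X Y κ : Type*}

/-- A nonprincipal ultrafilter, that is a point of the remainder `X*`, which is not in the closure
of any countable set of nonprincipal ultrafilters to which it does not belong. -/
def IsWeakPPoint (u : Ultrafilter X) : Prop :=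
  (u : Filter X) ≤ cofinite ∧ ∀ C : Set (Ultrafilter X), C.Countable →
    (∀ c ∈ C, (c : Filter X) ≤ cofinite) → u ∉ C → u ∉ closure C

theorem mem_closure_ultrafilter_iff {u : Ultrafilter X} {C : Set (Ultrafilter X)} :
    u ∈ closure C ↔ ∀ V ∈ u, ∃ c ∈ C, V ∈ c := by
  rw [ultrafilterBasis_is_basis.mem_closure_iff]
  simp only [ultrafilterBasis, forall_mem_range, Set.Nonempty, mem_inter_iff, mem_ofPred_eq,
    and_comm]

theorem IsOK.isWeakPPoint [Uncountable κ] {u : Ultrafilter X} (hu : (u : Filter X) ≤ cofinite)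
    (hOK : IsOK κ u) : IsWeakPPoint u := by
  refine ⟨hu, fun C hC hfree huC hclosure => ?_⟩
  rw [mem_closure_ultrafilter_iff] at hclosure
  have hCne : C.Nonempty := (hclosure univ univ_mem).imp fun c hc => hc.1
  obtain ⟨c, rfl⟩ := hC.exists_eq_range hCne
  have hsep (n) : ∃ U ∈ u, U ∉ c n := by
    have hne : u ≠ c n := fun h => huC (h ▸ mem_range_self n)
    exact not_subset.1 (mt Ultrafilter.coe_le_coe.1 hne.symm)
  choose U hUu hUc using hsep
  obtain ⟨V, hVu, hV⟩ := hOK U hUu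
  have hhit (α) : ∃ n, V α ∈ c n := by simpa using hclosure (V α) (hVu α)
  choose g hg using hhit
  obtain ⟨n, hn⟩ : ∃ n, (g ⁻¹' {n}).Infinite := by
    by_contra! hfin
    have := countable_iUnion fun n => (hfin n).countable
    rw [← preimage_iUnion, iUnion_of_singleton, preimage_univ] at this
    exact not_countable (countable_univ_iff.1 this)
  obtain ⟨a, ha, hcard⟩ := hn.exists_subset_card_eq (n + 1)
  have hinter : ⋂ α ∈ a, V α ∈ c n :=
    (biInter_finset_mem a).2 fun α hα => (ha hα : g α = n) ▸ hg α
  refine hUc n ?_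
  have hfin := hV a n (by omega)
  filter_upwards [hinter, hfree _ (mem_range_self n) hfin.compl_mem_cofinite] with p hp hp'
  by_contra hpU
  exact hp' ⟨hp, hpU⟩

theorem IsWeakPPoint.map {u : Ultrafilter X} (hu : IsWeakPPoint u) {f : X → Y} (hf : Injective f) :
    IsWeakPPoint (u.map f) := by
  refine ⟨hf.tendsto_cofinite.mono_left hu.1, fun C hC hfree huC hclosure => ?_⟩
  rw [mem_closure_ultrafilter_iff] at hclosure
  have hinj : Injective (Ultrafilter.map f) := fun v w hvw =>
    Ultrafilter.coe_injective (map_injective hf (congrArg Ultrafilter.toFilter hvw))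
  refine hu.2 (Ultrafilter.map f ⁻¹' C) (hC.preimage hinj) (fun c hc => ?_) huC ?_
  · rw [← hf.comap_cofinite_eq]
    exact map_le_iff_le_comap.1 (hfree _ hc)
  · refine mem_closure_ultrafilter_iff.2 fun V hV => ?_
    obtain ⟨c, hcC, hVc⟩ := hclosure (f '' V) (image_mem_map hV)
    have hrange : range f ∈ c := mem_of_superset hVc (image_subset_range f V)
    have hmap : (c.comap hf hrange).map f = c :=
      Ultrafilter.coe_injective (map_comap_of_mem hrange)
    refine ⟨c.comap hf hrange, (congrArg (· ∈ C) hmap).mpr hcC, ?_⟩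
    exact mem_of_superset (preimage_mem_comap hVc) (hf.preimage_image V).subset

theorem two_power_continuum_le_mk_isWeakPPoint_binaryApprox :
    2 ^ 𝔠 ≤ #{u : Ultrafilter BinaryApprox | IsWeakPPoint u} := by
  obtain ⟨R, hR, hRc⟩ := exists_mk_eq_and_mk_compl_eq (ℕ → Bool)
  have hcont : #(ℕ → Bool) = 𝔠 := by simp
  obtain ⟨u, hinj, hu⟩ := exists_injective_isOK isLinkedFamily_binaryMatrix
    isIndependentOn_binaryMatrix (hR.trans hcont).ge
  have : Uncountable (ℕ → Bool) := by
    rw [← aleph0_lt_mk_iff, hcont]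
    exact aleph0_lt_continuum
  calc
    2 ^ 𝔠 = #(↥Rᶜ → ℕ → Bool) := by
      rw [mk_arrow, lift_id, lift_id, hRc, hcont, power_self_eq aleph0_le_continuum]
    _ ≤ _ := mk_le_of_injective (f := fun y => ⟨u y, (hu y).2.isWeakPPoint (hu y).1⟩)
      fun _ _ hyy' => hinj (congrArg Subtype.val hyy')

theorem two_power_continuum_le_mk_isWeakPPoint {X : Type u} {A : Set X} (hA : A.Infinite) :
    2 ^ 𝔠 ≤ #{u : Ultrafilter X | IsWeakPPoint u ∧ A ∈ u} := by
  obtain ⟨e, he⟩ := Countable.exists_injective_nat BinaryApprox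
  let f (p : BinaryApprox) : X := hA.natEmbedding A (e p)
  have hf : Injective f := Subtype.val_injective.comp ((hA.natEmbedding A).injective.comp he)
  have hfA (p) : f p ∈ A := (hA.natEmbedding A (e p)).2
  let φ (u : {u : Ultrafilter BinaryApprox | IsWeakPPoint u}) :
      {u : Ultrafilter X | IsWeakPPoint u ∧ A ∈ u} :=
    ⟨u.1.map f, u.2.map hf, Ultrafilter.mem_map.2 (univ_mem' hfA)⟩
  have hφ : Injective φ := fun u v huv => Subtype.ext <| Ultrafilter.coe_injective <|
    map_injective hf (congrArg (fun w => (w.1 : Filter X)) huv)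
  simpa using (lift_le.2 two_power_continuum_le_mk_isWeakPPoint_binaryApprox).trans
    (lift_mk_le_lift_mk_of_injective hφ)

theorem exists_injective_isWeakPPoint_mem {X : Type u} [Infinite X] (hX : #X ^ ℵ₀ = #X)
    (hle : #X ≤ 2 ^ 𝔠) :
    ∃ u : X × Bool → Ultrafilter X, Injective u ∧ (∀ j, IsWeakPPoint (u j)) ∧
      (∀ j, ∃ A ∈ u j, A.Countable) ∧
      ∀ f g : ℕ ↪ X, ∃ x, range f ∈ u (x, true) ∧ range g ∈ u (x, false) := by
  obtain ⟨e, he⟩ := exists_surjective_natEmbedding_pair hX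
  have hcard : #(X × Bool) = #X := by
    simp [mul_eq_left (aleph0_le_mk X) (ofNat_lt_aleph0.le.trans (aleph0_le_mk X))]
  obtain ⟨u, hu, hmem⟩ := exists_injective_forall_mem
    (fun j : X × Bool => {v : Ultrafilter X | IsWeakPPoint v ∧ range (e j.1 j.2) ∈ v})
    fun j => (hcard.trans_le hle).trans
      (two_power_continuum_le_mk_isWeakPPoint (infinite_range_of_injective (e j.1 j.2).injective))
  refine ⟨u, hu, fun j => (hmem j).1, fun j => ⟨_, (hmem j).2, countable_range _⟩, fun f g => ?_⟩
  obtain ⟨x, hx⟩ := he fun b => cond b f g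
  exact ⟨x, by simpa [hx] using (hmem (x, true)).2, by simpa [hx] using (hmem (x, false)).2⟩

end WeakPPoint

section DisjointRepresentatives

variable {X ι : Type*}

theorem exists_pairwiseDisjoint_mem_ultrafilter {u : ι → Ultrafilter X} {T : Set ι}
    (hT : T.Countable) (hu : ∀ j ∈ T, u j ∉ closure (u '' (T \ {j}))) :
    ∃ D : ι → Set X, (∀ j ∈ T, D j ∈ u j) ∧ T.PairwiseDisjoint D := by
  have hsep (j) : ∃ E : Set X, j ∈ T → E ∈ u j ∧ ∀ k ∈ T, k ≠ j → Eᶜ ∈ u k := by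
    by_cases hj : j ∈ T
    · have := hu j hj
      simp only [mem_closure_ultrafilter_iff, not_forall, not_exists, not_and] at this
      obtain ⟨E, hE, hEu⟩ := this
      exact ⟨E, fun _ => ⟨hE, fun k hk hkj =>
        Ultrafilter.compl_mem_iff_notMem.2 (hEu _ ⟨k, ⟨hk, hkj⟩, rfl⟩)⟩⟩
    · exact ⟨∅, fun h => (hj h).elim⟩
  choose E hE using hsep
  obtain ⟨f, hf⟩ := countable_iff_exists_injOn.1 hT
  have hfin (j) : {k ∈ T | f k < f j}.Finite :=
    .of_injOn (f := f) (t := Iio (f j)) (fun k hk => hk.2) (hf.mono (sep_subset _ _)) (finite_Iio _)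
  refine ⟨fun j => E j ∩ ⋂ k ∈ {k ∈ T | f k < f j}, (E k)ᶜ, fun j hj => ?_, fun j hj k hk hjk => ?_⟩
  · refine inter_mem (hE j hj).1 ((biInter_mem (hfin j)).2 fun k hk => ?_)
    exact (hE k hk.1).2 j hj fun h => hk.2.ne (h ▸ rfl)
  · refine disjoint_left.2 fun p hpj hpk => ?_
    rcases (hf.ne hj hk hjk).lt_or_gt with hlt | hlt
    · exact mem_iInter₂.1 hpk.2 j ⟨hj, hlt⟩ hpj.1
    · exact mem_iInter₂.1 hpj.2 k ⟨hk, hlt⟩ hpk.1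

theorem IsWeakPPoint.exists_pairwiseDisjoint_mem_iSup {B : Type*} [Countable B]
    {u : ι × B → Ultrafilter X} (hu : Injective u) (hweak : ∀ j, IsWeakPPoint (u j)) {S : Set ι}
    (hS : S.Countable) :
    ∃ D : ι → Set X, (∀ z ∈ S, D z ∈ ⨆ b, (u (z, b) : Filter X)) ∧ S.PairwiseDisjoint D := by
  have hT : (S ×ˢ (univ : Set B)).Countable := hS.prod countable_univ
  obtain ⟨D, hD, hdisj⟩ := exists_pairwiseDisjoint_mem_ultrafilter hT fun j _ =>
    (hweak j).2 _ ((hT.mono sdiff_subset).image u) (forall_mem_image.2 fun k _ => (hweak k).1)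
      fun ⟨k, hk, hkj⟩ => hk.2 (hu hkj)
  refine ⟨fun z => ⋃ b, D (z, b), fun z hz => ?_, fun z hz w hw hzw => ?_⟩
  · exact mem_iSup.2 fun b => mem_of_superset (hD (z, b) ⟨hz, trivial⟩)
      (subset_iUnion (fun b => D (z, b)) b)
  · simp only [onFun, disjoint_iUnion_left, disjoint_iUnion_right]
    exact fun b b' => hdisj ⟨hz, trivial⟩ ⟨hw, trivial⟩ fun h => hzw (congrArg Prod.fst h)

end DisjointRepresentatives

section FilterAssignment

variable {X : Type*} {l : X → Filter X} {D D' : X → Set X} {x y : X}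

/-- The points reached from `x` by finitely many steps from a point `z` to a point of `D z`. -/
def reachable (D : X → Set X) (x : X) : Set X :=
  {w | Relation.ReflTransGen (fun z w => w ∈ D z) x w}

theorem reachable_subset_reachable (hD : ∀ z, D z ⊆ D' z) (x : X) :
    reachable D x ⊆ reachable D' x :=
  fun _ hw => Relation.ReflTransGen.mono (fun z _ h => hD z h) _ _ hw

theorem mem_reachable_self (D : X → Set X) (x : X) : x ∈ reachable D x := .refl

theorem countable_reachable (hD : ∀ z, (D z).Countable) (x : X) : (reachable D x).Countable := by
  let S (n : ℕ) : Set X := (fun S => ⋃ z ∈ S, D z)^[n] {x}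
  have hsucc (n) : S (n + 1) = ⋃ z ∈ S n, D z := iterate_succ_apply' _ n _
  have hS (n) : (S n).Countable := by
    induction n with
    | zero => exact countable_singleton x
    | succ n ih => exact hsucc n ▸ ih.biUnion fun z _ => hD z
  refine (countable_iUnion hS).mono fun w hw => mem_iUnion.2 ?_
  induction hw with
  | refl => exact ⟨0, rfl⟩
  | tail _ hzw ih =>
    obtain ⟨n, hn⟩ := ih
    exact ⟨n + 1, hsucc n ▸ mem_biUnion hn hzw⟩

/-- In general `l z` is not the neighborhood filter of `z` in `mkOfNhds l`; only `IsOpen` unfolds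
to a condition on `l`. -/
theorem isOpen_mkOfNhds_reachable (hD : ∀ z ∈ reachable D x, D z ∈ l z) :
    IsOpen[.mkOfNhds l] (reachable D x) :=
  fun z hz => mem_of_superset (hD z hz) fun _ hw => Relation.ReflTransGen.tail hz hw

theorem disjoint_reachable (hxy : x ≠ y) (hx : ∀ z, x ∉ D z) (hy : ∀ z, y ∉ D z)
    (hD : (reachable D x ∪ reachable D y).PairwiseDisjoint D) :
    Disjoint (reachable D x) (reachable D y) := by
  refine disjoint_left.2 fun w hxw => ?_
  induction hxw with
  | refl =>
    intro hyx
    obtain hyx | ⟨z, -, hzx⟩ := Relation.ReflTransGen.cases_tail hyx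
    exacts [hxy hyx, hx z hzx]
  | @tail z w hxz hzw ih =>
    intro hyw
    obtain rfl | ⟨z', hyz', hz'w⟩ := Relation.ReflTransGen.cases_tail hyw
    · exact hy z hzw
    · have hne : z ≠ z' := fun h => ih (h ▸ hyz')
      exact disjoint_left.1 (hD (.inl hxz) (.inr hyz') hne) hzw hz'w

theorem reachable_mem_nhds_mkOfNhds (hD : ∀ z, D z ∈ l z) (x : X) :
    reachable D x ∈ @nhds X (.mkOfNhds l) x := by
  let _ : TopologicalSpace X := .mkOfNhds l
  exact (isOpen_mkOfNhds_reachable fun z _ => hD z).mem_nhds (mem_reachable_self D x)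

theorem t2Space_mkOfNhds (hl : ∀ z, l z ≤ cofinite) (hD : ∀ z, (D z).Countable)
    (hDl : ∀ z, D z ∈ l z)
    (hdisj : ∀ S : Set X, S.Countable →
      ∃ E : X → Set X, (∀ z ∈ S, E z ∈ l z) ∧ S.PairwiseDisjoint E) :
    @T2Space X (.mkOfNhds l) := by
  let _ : TopologicalSpace X := .mkOfNhds l
  refine ⟨fun x y hxy => ?_⟩
  have hS := (countable_reachable hD x).union (countable_reachable hD y)
  obtain ⟨E, hEl, hE⟩ := hdisj _ hS
  let D' (z : X) : Set X := (E z ∩ D z) \ {x, y}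
  have hD'D (z) : D' z ⊆ D z := sdiff_subset.trans inter_subset_right
  have hsub := union_subset_union (reachable_subset_reachable hD'D x)
    (reachable_subset_reachable hD'D y)
  have hD'l (z) (hz : z ∈ reachable D' x ∪ reachable D' y) : D' z ∈ l z :=
    sdiff_mem (inter_mem (hEl z (hsub hz)) (hDl z)) (hl z (by simp))
  refine ⟨reachable D' x, reachable D' y, isOpen_mkOfNhds_reachable fun z hz => hD'l z (.inl hz),
    isOpen_mkOfNhds_reachable fun z hz => hD'l z (.inr hz), .refl, .refl, ?_⟩
  exact disjoint_reachable hxy (by simp [D']) (by simp [D'])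
    ((hE.subset hsub).mono fun z => sdiff_subset.trans inter_subset_left)

theorem not_isOpen_mkOfNhds_singleton [(l x).NeBot] (hx : l x ≤ cofinite) :
    ¬IsOpen[.mkOfNhds l] {x} := fun hopen => by
  have hcompl : {x}ᶜ ∈ l x := hx (finite_singleton x).compl_mem_cofinite
  simpa using inter_mem (hopen x rfl) hcompl

theorem mem_of_isClosed_mkOfNhds {F : Set X} (hF : IsClosed[.mkOfNhds l] F)
    (hx : ∃ᶠ z in l x, z ∈ F) : x ∈ F := by
  by_contra hxF
  have hFc : IsOpen[.mkOfNhds l] Fᶜ := @IsClosed.isOpen_compl X (.mkOfNhds l) F hF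
  exact hx (hFc x hxF)

theorem isSAU_mkOfNhds [Nontrivial X] [∀ x, (l x).NeBot] (hl : ∀ x, l x ≤ cofinite)
    (hT2 : @T2Space X (.mkOfNhds l))
    (hpairs : ∀ f g : ℕ ↪ X, ∃ x, (∃ᶠ z in l x, z ∈ range f) ∧ ∃ᶠ z in l x, z ∈ range g) :
    @IsSAU X (.mkOfNhds l) := by
  obtain ⟨x, y, hxy⟩ := exists_pair_ne X
  refine ⟨hT2, ⟨x, y, hxy, not_isOpen_mkOfNhds_singleton (hl x),
    not_isOpen_mkOfNhds_singleton (hl y)⟩, fun F G hF hG hFinf hGinf => ?_⟩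
  let f := (hFinf.natEmbedding F).trans (.subtype _)
  let g := (hGinf.natEmbedding G).trans (.subtype _)
  have hfF : range f ⊆ F := range_subset_iff.2 fun n => (hFinf.natEmbedding F n).2
  have hgG : range g ⊆ G := range_subset_iff.2 fun n => (hGinf.natEmbedding G n).2
  obtain ⟨x, hxf, hxg⟩ := hpairs f g
  exact ⟨x, mem_of_isClosed_mkOfNhds hF (hxf.mono fun _ h => hfF h),
    mem_of_isClosed_mkOfNhds hG (hxg.mono fun _ h => hgG h)⟩

end FilterAssignment

/-- if `ω ≤ κ = κ^ω ≤ 2^𝔠`, then there is a locally countable SAU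
space of cardinality `κ` (in particular, in ZFC there is one of cardinality `2^𝔠`). -/
theorem stmt15 (κ : Cardinal.{0}) (h1 : ℵ₀ ≤ κ) (h2 : κ ^ ℵ₀ = κ)
    (h3 : κ ≤ 2 ^ Cardinal.continuum) :
    ∃ (X : Type) (_ : TopologicalSpace X),
      IsSAU X ∧ (∀ x : X, ∃ U ∈ nhds x, U.Countable) ∧ #X = κ := by
  let X := κ.out
  have hX : #X = κ := mk_out κ
  have : Infinite X := infinite_iff.2 (h1.trans_eq hX.symm)
  obtain ⟨u, hu, hweak, hcount, hpairs⟩ :=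
    exists_injective_isWeakPPoint_mem (X := X) (by rw [hX, h2]) (hX.trans_le h3)
  let l (x : X) : Filter X := ⨆ b, (u (x, b) : Filter X)
  have hl (x) : l x ≤ cofinite := iSup_le fun b => (hweak (x, b)).1
  have : ∀ x, (l x).NeBot := fun x => iSup_neBot.2 ⟨true, (u (x, true)).neBot⟩
  choose A hA hAc using hcount
  let D (x : X) : Set X := ⋃ b, A (x, b)
  have hD (x) : D x ∈ l x := mem_iSup.2 fun b =>
    mem_of_superset (hA (x, b)) (subset_iUnion (fun b => A (x, b)) b)
  have hDc (x) : (D x).Countable := countable_iUnion fun b => hAc (x, b)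
  have hfreq {x b} {S : Set X} (hS : S ∈ u (x, b)) : ∃ᶠ z in l x, z ∈ S :=
    (Eventually.frequently hS).filter_mono (le_iSup (fun b => (u (x, b) : Filter X)) b)
  have hT2 := t2Space_mkOfNhds hl hDc hD fun S hS =>
    IsWeakPPoint.exists_pairwiseDisjoint_mem_iSup hu hweak hS
  refine ⟨X, .mkOfNhds l, isSAU_mkOfNhds hl hT2 fun f g => ?_, fun x => ?_, hX⟩
  · exact (hpairs f g).imp fun x h => ⟨hfreq h.1, hfreq h.2⟩
  · exact ⟨reachable D x, reachable_mem_nhds_mkOfNhds hD x, countable_reachable hDc x⟩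
end

section
/- For 𝔠 ≤ κ ≤ 2^𝔠, there exists a locally countable SAU space of cardinality κ if and only if κ^ω = κ. -/
open Cardinal Set

/-!
In a locally countable, countably compact T₁ space `X`, every infinite set meets some countable
neighbourhood in an infinite set, so an almost disjoint family of infinite subsets of `X` has at
most `#X * 𝔠` members. The branches of the tree of finite sequences in `X` form such a family of
size `#X ^ ℵ₀`.

Conversely, attach to every point `x` a free filter `N x` containing a countable set, and call `U`
open if `U ∈ N x` for all `x ∈ U`. If any two infinite sets are both `N x`-positive for some `x`,
then any two infinite closed sets meet. If every countable family of these filters has pairwise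
disjoint members, the space is Hausdorff: inside a countable open set, the points reachable from
`x` and from `y` through such members form disjoint open sets. When `#X ^ ℵ₀ = #X`, each pair of
injective sequences in `X` can be handled by its own point `x`, with `N x` obtained by pushing
forward two filters on `ℕ`. It remains to find `2 ^ 𝔠` free filters on `ℕ` which can be
separated, countably many at a time, after arbitrary injections into `ℕ`. They are generated by the
rows of an independent matrix of subsets of `ℕ` indexed by `𝔠`, where an Engelking–Karłowicz
family of functions selects the entry of each row.
-/

namespace SAU

open Filter Function Topology

universe u

section CountablyCompact

theorem exists_almostDisjoint_family (X : Type u) [Infinite X] :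
    ∃ B : (ℕ → X) → Set X, (∀ f, (B f).Infinite) ∧ Pairwise fun f g => (B f ∩ B g).Finite := by
  obtain ⟨code⟩ : Nonempty (List X ↪ X) := by
    rw [← Cardinal.le_def, mk_list_eq_mk]
  let branch (f : ℕ → X) (n : ℕ) : X := code ((List.range n).map f)
  have eq_of_branch_eq {f g n m} (h : branch f n = branch g m) : n = m ∧ ∀ k < n, f k = g k := by
    have hlist := code.injective h
    obtain rfl : n = m := by simpa using congrArg List.length hlist
    exact ⟨rfl, by simpa using hlist⟩
  refine ⟨fun f => range (branch f),
    fun f => infinite_range_of_injective fun n m h => (eq_of_branch_eq h).1, fun f g hfg => ?_⟩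
  obtain ⟨k, hk⟩ := Function.ne_iff.1 hfg
  refine ((finite_Iic k).image (branch f)).subset ?_
  rintro _ ⟨⟨n, rfl⟩, m, hm⟩
  exact ⟨n, not_lt.1 fun hkn => hk ((eq_of_branch_eq hm.symm).2 k hkn), rfl⟩

theorem mk_le_mul_continuum_of_almostDisjoint {ι X : Type u} {U : X → Set X}
    (hU : ∀ x, (U x).Countable) {B : ι → Set X} (hBU : ∀ i, ∃ x, (U x ∩ B i).Infinite)
    (hB : Pairwise fun i j => (B i ∩ B j).Finite) : #ι ≤ #X * 𝔠 := by
  choose x hx using hBU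
  let trace (i : ι) : Σ x, Set (U x) := ⟨x i, (↑) ⁻¹' B i⟩
  have trace_injective : Injective trace := by
    intro i j hij
    by_contra hne
    have hUB : U (x i) ∩ B i = U (x j) ∩ B j := by
      have himage := congrArg (fun p : Σ x, Set (U x) => ((↑) '' p.2 : Set X)) hij
      simpa only [trace, Subtype.image_preimage_coe] using himage
    exact hx i ((hB hne).subset fun y hy => ⟨hy.2, (hUB ▸ hy).2⟩)
  calc #ι ≤ #(Σ x, Set (U x)) := mk_le_of_injective trace_injective
    _ = sum fun x => #(Set (U x)) := mk_sigma _
    _ ≤ sum fun _ : X => 𝔠 := sum_le_sum _ _ fun x => by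
      rw [mk_set, ← two_power_aleph0]
      exact power_le_power_left two_ne_zero (hU x).le_aleph0
    _ = #X * 𝔠 := sum_const' _ _

theorem mk_power_aleph0_eq_of_countablyCompactSpace {X : Type u} [TopologicalSpace X] [T1Space X]
    [CountablyCompactSpace X] (hX : ∀ x : X, ∃ U ∈ 𝓝 x, U.Countable) (hcard : 𝔠 ≤ #X) :
    #X ^ ℵ₀ = #X := by
  have : Infinite X := infinite_iff.2 (aleph0_le_continuum.trans hcard)
  choose U hU hUc using hX
  obtain ⟨B, hBinf, hB⟩ := exists_almostDisjoint_family X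
  have hBU (f : ℕ → X) : ∃ x, (U x ∩ B f).Infinite := by
    obtain ⟨x, -, hx⟩ := CountablyCompactSpace.isCountablyCompact_univ.exists_accPt_of_infinite
      (subset_univ _) (hBinf f)
    exact ⟨x, .of_accPt (hx.nhds_inter (hU x))⟩
  refine le_antisymm ?_ (self_le_power _ one_le_aleph0)
  calc #X ^ ℵ₀ = #(ℕ → X) := by simp
    _ ≤ #X * 𝔠 := mk_le_mul_continuum_of_almostDisjoint hUc hBU hB
    _ = #X := mul_eq_left (aleph0_le_mk X) hcard continuum_ne_zero

theorem _root_.IsSAU.countablyCompactSpace {X : Type u} [TopologicalSpace X] (hX : IsSAU X) :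
    CountablyCompactSpace X := by
  obtain ⟨_, -, hinter⟩ := hX
  refine ⟨isCountablyCompact_iff_infinite_subset_has_accPt.2 fun A _ hA => ?_⟩
  by_contra! hacc
  have isClosed_of_subset {B : Set X} (hBA : B ⊆ A) : IsClosed B :=
    (isClosed_iff_derivedSet_subset B).2 fun x hx =>
      absurd (derivedSet_mono B A hBA hx) (hacc x (mem_univ x))
  obtain ⟨B, C, hBC, hdisj, hcard⟩ := hA.exists_union_disjoint_cardinal_eq_of_infinite
  have hBC_iff : B.Infinite ↔ C.Infinite := by
    rw [← infinite_coe_iff, ← infinite_coe_iff, infinite_iff, infinite_iff, hcard]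
  have hBinf : B.Infinite := by
    rcases infinite_union.1 (hBC ▸ hA) with h | h
    exacts [h, hBC_iff.2 h]
  obtain ⟨x, hxB, hxC⟩ := hinter B C (isClosed_of_subset (hBC ▸ subset_union_left))
    (isClosed_of_subset (hBC ▸ subset_union_right)) hBinf (hBC_iff.1 hBinf)
  exact disjoint_left.1 hdisj hxB hxC

end CountablyCompact

section SeparatedOn

variable {ι α : Type*}

/-- The filters `l i`, for `i ∈ s`, have pairwise disjoint members. For countable `s` this is the
strong form of discreteness that makes the space built below Hausdorff. -/
def SeparatedOn (l : ι → Filter α) (s : Set ι) : Prop :=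
  ∃ T : ι → Set α, (∀ i ∈ s, T i ∈ l i) ∧ s.PairwiseDisjoint T

theorem SeparatedOn.of_map {β : Type*} {l : ι → Filter α} {s : Set ι} (j : α → β)
    (h : SeparatedOn (fun i => map j (l i)) s) : SeparatedOn l s := by
  obtain ⟨T, hT, hdisj⟩ := h
  exact ⟨fun i => j ⁻¹' T i, hT, fun a ha b hb hab => (hdisj ha hb hab).preimage j⟩

theorem SeparatedOn.iSup {β : Type*} [Countable β] {l : ι × β → Filter α} {s : Set ι}
    (h : SeparatedOn l (s ×ˢ Set.univ)) : SeparatedOn (fun i => ⨆ b, l (i, b)) s := by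
  obtain ⟨T, hT, hdisj⟩ := h
  refine ⟨fun i => ⋃ b, T (i, b), fun i hi => mem_iSup.2 fun b =>
    mem_of_superset (hT (i, b) ⟨hi, mem_univ b⟩) (subset_iUnion (fun b => T (i, b)) b), ?_⟩
  intro i hi j hj hij
  simp only [Function.onFun, disjoint_iUnion_left, disjoint_iUnion_right]
  exact fun c b => hdisj (x := (i, b)) (y := (j, c)) ⟨hi, mem_univ _⟩ ⟨hj, mem_univ _⟩
    fun h => hij (congrArg Prod.fst h)

end SeparatedOn

section FilterSystem

variable {X : Type*} {N : X → Filter X}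

-- Only the open sets of `mkOfNhds N` matter: `N x` is not its neighbourhood filter at `x`.
theorem exists_isOpen_mkOfNhds_countable (hN : ∀ x, ∃ S ∈ N x, S.Countable) (x : X) :
    ∃ U, IsOpen[.mkOfNhds N] U ∧ x ∈ U ∧ U.Countable := by
  choose S hS hSc using hN
  let step (A : Set X) : Set X := ⋃ y ∈ A, S y
  have hcount (n : ℕ) : (step^[n] {x}).Countable := by
    induction n with
    | zero => exact countable_singleton x
    | succ n ih =>
      rw [iterate_succ_apply']
      exact ih.biUnion fun y _ => hSc y
  refine ⟨⋃ n, step^[n] {x}, fun y hy => ?_, mem_iUnion.2 ⟨0, rfl⟩, countable_iUnion hcount⟩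
  obtain ⟨n, hn⟩ := mem_iUnion.1 hy
  refine mem_of_superset (hS y) fun z hz => mem_iUnion.2 ⟨n + 1, ?_⟩
  rw [iterate_succ_apply']
  exact mem_biUnion hn hz

theorem not_isOpen_mkOfNhds_singleton {x : X} [(N x).NeBot] (hx : N x ≤ cofinite) :
    ¬ IsOpen[.mkOfNhds N] {x} := fun h =>
  have hmem : {x} ∩ {x}ᶜ ∈ N x :=
    inter_mem (h x rfl) (hx (finite_singleton x).compl_mem_cofinite)
  empty_notMem (N x) (inter_compl_self {x} ▸ hmem)

theorem mem_of_isClosed_mkOfNhds_of_frequently {F : Set X} (hF : IsClosed[.mkOfNhds N] F) {x : X}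
    (hx : ∃ᶠ y in N x, y ∈ F) : x ∈ F := by
  by_contra hxF
  exact hx (hF.isOpen_compl x hxF)

theorem disjoint_reflTransGen_of_leftUnique {E : X → X → Prop} (hE : Relator.LeftUnique E)
    {a b : X} (hab : a ≠ b) (ha : ∀ y, ¬ E y a) (hb : ∀ y, ¬ E y b) :
    Disjoint {z | Relation.ReflTransGen E a z} {z | Relation.ReflTransGen E b z} := by
  refine disjoint_left.2 fun z haz hbz => ?_
  have htotal : Relation.ReflTransGen (swap E) a b ∨ Relation.ReflTransGen (swap E) b a :=
    Relation.ReflTransGen.total_of_right_unique (fun _ _ _ h h' => hE h h')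
      (Relation.reflTransGen_swap.2 haz) (Relation.reflTransGen_swap.2 hbz)
  rcases htotal with h | h
  · obtain rfl | ⟨y, hay, -⟩ := h.cases_head
    exacts [hab rfl, ha y hay]
  · obtain rfl | ⟨y, hby, -⟩ := h.cases_head
    exacts [hab rfl, hb y hby]

theorem t2Space_mkOfNhds (hcof : ∀ x, N x ≤ cofinite) (hcount : ∀ x, ∃ S ∈ N x, S.Countable)
    (hsep : ∀ s : Set X, s.Countable → SeparatedOn N s) : @T2Space X (.mkOfNhds N) := by
  let _ : TopologicalSpace X := .mkOfNhds N
  refine ⟨fun a b hab => ?_⟩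
  obtain ⟨U, hU, haU, hUc⟩ := exists_isOpen_mkOfNhds_countable hcount a
  obtain ⟨V, hV, hbV, hVc⟩ := exists_isOpen_mkOfNhds_countable hcount b
  obtain ⟨T, hT, hdisj⟩ := hsep (U ∪ V) (hUc.union hVc)
  let E (y z : X) : Prop := y ∈ U ∪ V ∧ z ∈ T y ∩ (U ∪ V) ∩ {a, b}ᶜ
  have isOpen_reach {c : X} (hc : c ∈ U ∪ V) : IsOpen {z | Relation.ReflTransGen E c z} := by
    intro y hy
    have hyUV : y ∈ U ∪ V := by
      obtain rfl | ⟨_, -, hEy⟩ := Relation.ReflTransGen.cases_tail hy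
      exacts [hc, hEy.2.1.2]
    have hstep : T y ∩ (U ∪ V) ∩ {a, b}ᶜ ∈ N y :=
      inter_mem (inter_mem (hT y hyUV) (hU.union hV y hyUV))
        (hcof y (toFinite {a, b}).compl_mem_cofinite)
    exact mem_of_superset hstep fun z hz => Relation.ReflTransGen.tail hy ⟨hyUV, hz⟩
  have hE : Relator.LeftUnique E := fun y y' z hy hy' =>
    hdisj.elim_set hy.1 hy'.1 z hy.2.1.1 hy'.2.1.1
  exact ⟨_, _, isOpen_reach (.inl haU), isOpen_reach (.inr hbV), .refl, .refl,
    disjoint_reflTransGen_of_leftUnique hE hab (fun _ h => h.2.2 (.inl rfl))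
      (fun _ h => h.2.2 (.inr rfl))⟩

variable (N) in
/-- An assignment of filters to the points of `X` for which the topology `mkOfNhds N`, whose open
sets are the `U` with `U ∈ N x` for all `x ∈ U`, is strongly anti-Urysohn (unless `X` is a
subsingleton) and locally countable. -/
structure IsSAUFilterSystem : Prop where
  neBot (x : X) : (N x).NeBot
  le_cofinite (x : X) : N x ≤ cofinite
  exists_countable_mem (x : X) : ∃ S ∈ N x, S.Countable
  separatedOn (s : Set X) (hs : s.Countable) : SeparatedOn N s
  exists_frequently (G H : Set X) (hG : G.Infinite) (hH : H.Infinite) :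
    ∃ x, (∃ᶠ y in N x, y ∈ G) ∧ ∃ᶠ y in N x, y ∈ H

theorem IsSAUFilterSystem.isSAU [Nontrivial X] (hN : IsSAUFilterSystem N) :
    @IsSAU X (.mkOfNhds N) := by
  have not_isOpen (x : X) : ¬ IsOpen[.mkOfNhds N] {x} :=
    have := hN.neBot x
    not_isOpen_mkOfNhds_singleton (hN.le_cofinite x)
  obtain ⟨x, y, hxy⟩ := exists_pair_ne X
  refine ⟨t2Space_mkOfNhds hN.le_cofinite hN.exists_countable_mem hN.separatedOn,
    ⟨x, y, hxy, not_isOpen x, not_isOpen y⟩, fun G H hG hH hGinf hHinf => ?_⟩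
  obtain ⟨z, hzG, hzH⟩ := hN.exists_frequently G H hGinf hHinf
  exact ⟨z, mem_of_isClosed_mkOfNhds_of_frequently hG hzG,
    mem_of_isClosed_mkOfNhds_of_frequently hH hzH⟩

theorem IsSAUFilterSystem.exists_countable_mem_nhds (hN : IsSAUFilterSystem N) (x : X) :
    ∃ U ∈ @nhds X (.mkOfNhds N) x, U.Countable := by
  let _ : TopologicalSpace X := .mkOfNhds N
  obtain ⟨U, hU, hxU, hUc⟩ := exists_isOpen_mkOfNhds_countable hN.exists_countable_mem x
  exact ⟨U, hU.mem_nhds hxU, hUc⟩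

end FilterSystem

section Matrix

theorem exists_nat_injOn_preimage_fin (J : Finset (Set ℕ)) :
    ∃ k, InjOn (fun a : Set ℕ => ((↑) ⁻¹' a : Set (Fin k))) J := by
  have separates (a b : Set ℕ) :
      ∀ᶠ k in atTop, ((↑) ⁻¹' a : Set (Fin k)) = (↑) ⁻¹' b → a = b := by
    by_cases hab : a = b
    · exact .of_forall fun _ _ => hab
    · obtain ⟨n, hn⟩ : ∃ n, ¬ (n ∈ a ↔ n ∈ b) := by simpa [Set.ext_iff] using hab
      filter_upwards [eventually_gt_atTop n] with k hk h
      exact absurd (Set.ext_iff.1 h ⟨n, hk⟩) hn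
  obtain ⟨k, hk⟩ := ((J.eventually_all).2 fun a _ =>
    (J.eventually_all).2 fun b _ => separates a b).exists
  exact ⟨k, fun a ha b hb => hk a ha b hb⟩

/- A countable dense subset of `ℕ ^ I`, as in the Hewitt–Marczewski–Pondiczery theorem: it consists
of the functions depending on finitely many coordinates of the Cantor space `Set ℕ ⊇ I`. -/
theorem exists_seq_frequently_eqOn {I : Type*} (φ : I ↪ Set ℕ) :
    ∃ r : ℕ → I → ℕ, ∀ (J : Finset I) (v : I → ℕ), ∃ᶠ s in atTop, ∀ i ∈ J, r s i = v i := by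
  let eval (p : Σ k, Set (Fin k) → ℕ) (i : I) : ℕ := p.2 ((↑) ⁻¹' φ i)
  obtain ⟨e, he⟩ := exists_surjective_nat (Σ k, Set (Fin k) → ℕ)
  refine ⟨fun s => eval (e s.unpair.1), fun J v => frequently_atTop.2 fun n => ?_⟩
  obtain ⟨k, hk⟩ := exists_nat_injOn_preimage_fin (J.map φ)
  have hinj : Injective fun i : J => ((↑) ⁻¹' φ i : Set (Fin k)) := fun i j h =>
    Subtype.ext (φ.injective (hk (by simp) (by simp) h))
  obtain ⟨l, hl⟩ : ∃ l : Set (Fin k) → ℕ, ∀ i ∈ J, l ((↑) ⁻¹' φ i) = v i :=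
    ⟨extend (fun i : J => ((↑) ⁻¹' φ i : Set (Fin k))) (fun i => v i) 0,
      fun i hi => hinj.extend_apply _ _ ⟨i, hi⟩⟩
  obtain ⟨m, hm⟩ := he ⟨k, l⟩
  refine ⟨Nat.pair m n, Nat.right_le_pair m n, fun i hi => ?_⟩
  simp only [Nat.unpair_pair, hm]
  exact hl i hi

/-- Index of the block containing `p` in a partition of `ℕ` into finite blocks. Block `s` contains
`[2 ^ 2 ^ s, 2 ^ 2 ^ (s + 1))`, so its size is superlinear in the total size of the earlier ones. -/
def block (p : ℕ) : ℕ := Nat.log 2 (Nat.log 2 p)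

theorem lt_of_block_lt {p s : ℕ} (h : block p < s) : p < 2 ^ 2 ^ s :=
  Nat.lt_pow_of_log_lt one_lt_two (Nat.lt_pow_of_log_lt one_lt_two h)

theorem block_eq {p s : ℕ} (h : 2 ^ 2 ^ s ≤ p) (h' : p < 2 ^ 2 ^ (s + 1)) : block p = s := by
  have hp : p ≠ 0 := (Nat.pos_of_ne_zero (by positivity) |>.trans_le h).ne'
  have hlog : 2 ^ s ≤ Nat.log 2 p := Nat.le_log_of_pow_le one_lt_two h
  exact Nat.log_eq_of_pow_le_of_lt_pow hlog (Nat.log_lt_of_lt_pow hp h')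

/-- Entry `n` of the matrix row with column choice `r` and injections `σ`: the points whose block
has colour `n` and whose `σ n`-image avoids the images of all earlier points of other colours. -/
def matrixEntry (r : ℕ → ℕ) (σ : ℕ → ℕ ↪ ℕ) (n : ℕ) : Set ℕ :=
  {p | r (block p) = n ∧
    ∀ q, block q < block p → r (block q) ≠ n → σ n p ≠ σ (r (block q)) q}

theorem pairwise_disjoint_image_matrixEntry (r : ℕ → ℕ) (σ : ℕ → ℕ ↪ ℕ) :
    Pairwise (Disjoint on fun n => σ n '' matrixEntry r σ n) := by
  intro n m hnm
  refine disjoint_left.2 ?_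
  rintro _ ⟨p, ⟨rfl, hp⟩, rfl⟩ ⟨q, ⟨rfl, hq⟩, hpq⟩
  rcases lt_trichotomy (block p) (block q) with h | h | h
  · exact hq p h hnm hpq
  · exact hnm (congrArg r h)
  · exact hp q h hnm.symm hpq.symm

open Classical in
theorem card_filter_notMem_matrixEntry_le (r : ℕ → ℕ) (σ : ℕ → ℕ ↪ ℕ) (s : ℕ) :
    {p ∈ Finset.Ico (2 ^ 2 ^ s) (2 ^ 2 ^ (s + 1)) | p ∉ matrixEntry r σ (r s)}.card ≤
      2 ^ 2 ^ s := by
  rw [← Finset.card_map (σ (r s))]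
  refine (Finset.card_le_card ?_).trans
    ((Finset.card_image_le (s := Finset.range (2 ^ 2 ^ s))
      (f := fun q => σ (r (block q)) q)).trans_eq (Finset.card_range _))
  intro y hy
  obtain ⟨p, hp, rfl⟩ := Finset.mem_map.1 hy
  obtain ⟨hpIco, hbad⟩ := Finset.mem_filter.1 hp
  obtain rfl := block_eq (Finset.mem_Ico.1 hpIco).1 (Finset.mem_Ico.1 hpIco).2
  obtain ⟨q, hq, -, hpq⟩ : ∃ q, block q < block p ∧ r (block q) ≠ r (block p) ∧
      σ (r (block p)) p = σ (r (block q)) q := by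
    simpa [matrixEntry] using hbad
  exact Finset.mem_image.2 ⟨q, Finset.mem_range.2 (lt_of_block_lt hq), hpq.symm⟩

theorem exists_mem_matrixEntry {I : Type*} (r : ℕ → I → ℕ) (σ : I → ℕ → ℕ ↪ ℕ) (J : Finset I)
    {s : ℕ} (hs : J.card < s) :
    ∃ p ≥ s, ∀ i ∈ J, p ∈ matrixEntry (fun t => r t i) (σ i) (r s i) := by
  classical
  let bad (i : I) : Finset ℕ := {p ∈ Finset.Ico (2 ^ 2 ^ s) (2 ^ 2 ^ (s + 1)) |
    p ∉ matrixEntry (fun t => r t i) (σ i) (r s i)}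
  have hs_lt : s < 2 ^ 2 ^ s := (Nat.lt_two_pow_self).trans Nat.lt_two_pow_self
  have hcard : (J.biUnion bad).card < (Finset.Ico (2 ^ 2 ^ s) (2 ^ 2 ^ (s + 1))).card := by
    calc (J.biUnion bad).card ≤ J.card * 2 ^ 2 ^ s :=
          Finset.card_biUnion_le_card_mul _ _ _ fun i _ =>
            card_filter_notMem_matrixEntry_le (fun t => r t i) (σ i) s
      _ < (2 ^ 2 ^ s - 1) * 2 ^ 2 ^ s := by gcongr; omega
      _ = (Finset.Ico (2 ^ 2 ^ s) (2 ^ 2 ^ (s + 1))).card := by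
        rw [Nat.card_Ico, Nat.sub_mul, one_mul, pow_succ 2 s, pow_mul, sq]
  obtain ⟨p, hp, hgood⟩ := Finset.exists_mem_notMem_of_card_lt_card hcard
  refine ⟨p, hs_lt.le.trans (Finset.mem_Ico.1 hp).1, fun i hi => ?_⟩
  by_contra hbad
  exact hgood (Finset.mem_biUnion.2 ⟨i, hi, Finset.mem_filter.2 ⟨hp, hbad⟩⟩)

theorem exists_independent_matrix {I : Type*} (φ : I ↪ Set ℕ) (σ : I → ℕ → ℕ ↪ ℕ) :
    ∃ M : I → ℕ → Set ℕ, (∀ (v : I → ℕ) (J : Finset I), (⋂ i ∈ J, M i (v i)).Infinite) ∧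
      ∀ i, Pairwise (Disjoint on fun n => σ i n '' M i n) := by
  obtain ⟨r, hr⟩ := exists_seq_frequently_eqOn φ
  refine ⟨fun i => matrixEntry (fun s => r s i) (σ i), fun v J => ?_,
    fun i => pairwise_disjoint_image_matrixEntry _ _⟩
  refine infinite_of_forall_exists_gt fun n => ?_
  obtain ⟨s, hv, hJs, hns⟩ := ((hr J v).and_eventually
    ((eventually_gt_atTop J.card).and (eventually_gt_atTop n))).exists
  obtain ⟨p, hsp, hp⟩ := exists_mem_matrixEntry r σ J hJs
  exact ⟨p, mem_iInter₂.2 fun i hi => hv i hi ▸ hp i hi, hns.trans_le hsp⟩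

end Matrix

section SeparatedFilters

theorem exists_seq_injOn_preimage {A : Type*} [Nonempty A] {B : Set (Set A)} (hB : B.Countable) :
    ∃ d : ℕ → A, InjOn (fun b => d ⁻¹' b) B := by
  obtain ⟨b, hb⟩ := countable_iff_exists_subset_range.1 hB
  have separating_point (z : ℕ × ℕ) : ∃ x, b z.1 ≠ b z.2 → ¬ (x ∈ b z.1 ↔ x ∈ b z.2) := by
    by_cases h : b z.1 = b z.2
    · exact ⟨Classical.arbitrary A, fun hne => absurd h hne⟩
    · obtain ⟨x, hx⟩ : ∃ x, ¬ (x ∈ b z.1 ↔ x ∈ b z.2) := by simpa [Set.ext_iff] using h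
      exact ⟨x, fun _ => hx⟩
  choose d hd using separating_point
  refine ⟨fun k => d k.unpair, fun _ h₁ _ h₂ h => ?_⟩
  obtain ⟨n, rfl⟩ := hb h₁
  obtain ⟨m, rfl⟩ := hb h₂
  by_contra hne
  exact hd (n, m) hne (by simpa using Set.ext_iff.1 h (Nat.pair n m))

/- The Engelking–Karłowicz theorem for countable families: an index lists countably many points `d`
and countably many traces `e` on them, and the function of `γ` looks up the trace of `γ`. -/
theorem exists_colorings_injOn (A : Type*) [Nonempty A] :
    ∃ c : Set A → (ℕ → A) × (ℕ → Set ℕ) → ℕ,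
      ∀ B : Set (Set A), B.Countable → ∃ i, InjOn (fun γ => c γ i) B := by
  refine ⟨fun γ i => invFun i.2 (i.1 ⁻¹' γ), fun B hB => ?_⟩
  obtain ⟨d, hd⟩ := exists_seq_injOn_preimage hB
  obtain ⟨e, he⟩ := countable_iff_exists_subset_range.1 (hB.image (fun γ => d ⁻¹' γ))
  have invFun_spec {γ} (hγ : γ ∈ B) : e (invFun e (d ⁻¹' γ)) = d ⁻¹' γ :=
    invFun_eq (he (mem_image_of_mem _ hγ))
  refine ⟨(d, e), fun γ hγ δ hδ h => hd hγ hδ ?_⟩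
  simpa only [invFun_spec hγ, invFun_spec hδ] using congrArg e h

theorem neBot_iInf_principal_inf_cofinite {ι α : Type*} {S : ι → Set α}
    (hS : ∀ J : Finset ι, (⋂ i ∈ J, S i).Infinite) : ((⨅ i, 𝓟 (S i)) ⊓ cofinite).NeBot := by
  refine inf_neBot_iff_frequently_left.2 fun {p} hp => frequently_cofinite_iff_infinite.2 ?_
  obtain ⟨J, hJ, hJp⟩ := (hasBasis_iInf_principal_finite S).mem_iff.1 hp
  exact (by simpa using hS hJ.toFinset : (⋂ i ∈ J, S i).Infinite).mono hJp

theorem exists_extend_embeddings {Γ : Type*} {s : Set Γ} {k : Γ → ℕ} (hk : InjOn k s)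
    {σ : Γ → ℕ → ℕ} (hσ : ∀ γ ∈ s, Injective (σ γ)) :
    ∃ τ : ℕ → ℕ ↪ ℕ, ∀ γ ∈ s, τ (k γ) = σ γ := by
  have hτ (n : ℕ) : ∃ τ : ℕ ↪ ℕ, ∀ γ ∈ s, k γ = n → τ = σ γ := by
    by_cases h : ∃ γ ∈ s, k γ = n
    · obtain ⟨γ, hγ, rfl⟩ := h
      exact ⟨⟨σ γ, hσ γ hγ⟩, fun δ hδ h => by rw [hk hδ hγ h]; rfl⟩
    · exact ⟨.refl ℕ, fun γ hγ hn => absurd ⟨γ, hγ, hn⟩ h⟩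
  choose τ hτ using hτ
  exact ⟨τ, fun γ hγ => hτ _ γ hγ rfl⟩

theorem separatedOn_map_embedding {Γ α : Type*} {F : Γ → Filter ℕ} {s : Set Γ} (hs : s.Countable)
    (hF : ∀ τ : Γ → ℕ → ℕ, (∀ γ ∈ s, Injective (τ γ)) → SeparatedOn (fun γ => map (τ γ) (F γ)) s)
    (σ : Γ → ℕ ↪ α) : SeparatedOn (fun γ => map (σ γ) (F γ)) s := by
  have hrange : (⋃ γ ∈ s, range (σ γ)).Countable := hs.biUnion fun γ _ => countable_range _
  obtain ⟨j, hj⟩ := countable_iff_exists_injOn.1 hrange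
  refine .of_map j ?_
  simp only [Filter.map_map]
  exact hF (fun γ => j ∘ σ γ) fun γ hγ m n h => (σ γ).injective
    (hj (mem_biUnion hγ (mem_range_self m)) (mem_biUnion hγ (mem_range_self n)) h)

theorem nonempty_matrixIndex_embedding :
    Nonempty (((ℕ → Set ℕ) × (ℕ → Set ℕ)) × (ℕ → ℕ ↪ ℕ) ↪ Set ℕ) := by
  have mk_seq_set : #(ℕ → Set ℕ) = 𝔠 := by simp
  have mk_seq_embedding : #(ℕ → ℕ ↪ ℕ) ≤ 𝔠 :=
    calc #(ℕ → ℕ ↪ ℕ) ≤ #(ℕ → ℕ → ℕ) :=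
          mk_le_of_injective (DFunLike.coe_injective (F := ℕ ↪ ℕ)).comp_left
      _ = 𝔠 := by simp
  rw [← Cardinal.le_def, mk_set, mk_nat, two_power_aleph0]
  calc #(((ℕ → Set ℕ) × (ℕ → Set ℕ)) × (ℕ → ℕ ↪ ℕ)) = 𝔠 * 𝔠 * #(ℕ → ℕ ↪ ℕ) := by
        rw [← mul_def, ← mul_def, mk_seq_set]
    _ ≤ 𝔠 * 𝔠 * 𝔠 := by gcongr
    _ = 𝔠 := by simp

theorem exists_filters_separatedOn_map {Γ : Type*} (φ : Γ ↪ Set (Set ℕ)) :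
    ∃ F : Γ → Filter ℕ, (∀ γ, (F γ).NeBot) ∧ (∀ γ, F γ ≤ cofinite) ∧
      ∀ s : Set Γ, s.Countable → ∀ σ : Γ → ℕ → ℕ, (∀ γ ∈ s, Injective (σ γ)) →
        SeparatedOn (fun γ => map (σ γ) (F γ)) s := by
  obtain ⟨c, hc⟩ := exists_colorings_injOn (Set ℕ)
  obtain ⟨ψ⟩ := nonempty_matrixIndex_embedding
  obtain ⟨M, hMinf, hMdisj⟩ := exists_independent_matrix ψ Prod.snd
  refine ⟨fun γ => (⨅ i, 𝓟 (M i (c (φ γ) i.1))) ⊓ cofinite,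
    fun γ => neBot_iInf_principal_inf_cofinite (hMinf _), fun γ => inf_le_right,
    fun s hs σ hσ => ?_⟩
  obtain ⟨i, hi⟩ := hc (φ '' s) (hs.image φ)
  have hcolor : InjOn (fun γ => c (φ γ) i) s :=
    hi.comp φ.injective.injOn (mapsTo_image φ s)
  obtain ⟨τ, hτ⟩ := exists_extend_embeddings hcolor hσ
  refine ⟨fun γ => τ (c (φ γ) i) '' M (i, τ) (c (φ γ) i), fun γ hγ => ?_,
    fun γ hγ δ hδ hne => hMdisj (i, τ) (hcolor.ne hγ hδ hne)⟩
  simp only [← hτ γ hγ]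
  exact image_mem_map (mem_inf_of_left (mem_iInf_of_mem (i, τ) (mem_principal_self _)))

end SeparatedFilters

section Construction

theorem mk_bool_arrow_embedding_le {X : Type u} (hX : #X ^ ℵ₀ = #X) : #(Bool → ℕ ↪ X) ≤ #X :=
  calc #(Bool → ℕ ↪ X) ≤ #(Bool → ℕ → X) :=
        mk_le_of_injective (DFunLike.coe_injective (F := ℕ ↪ X)).comp_left
    _ = (#X ^ ℵ₀) ^ (2 : Cardinal.{u}) := by simp
    _ = #X := by rw [← power_mul, aleph0_mul_ofNat, hX]

theorem infinite_of_power_aleph0_eq {X : Type u} [Nontrivial X] (hX : #X ^ ℵ₀ = #X) :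
    Infinite X := by
  rw [infinite_iff, ← hX]
  calc ℵ₀ ≤ 𝔠 := aleph0_le_continuum
    _ = 2 ^ ℵ₀ := two_power_aleph0.symm
    _ ≤ #X ^ ℵ₀ := power_le_power_right (two_le_iff.2 (exists_pair_ne X))

theorem nonempty_prod_bool_embedding {X : Type u} [Infinite X] (hX : #X ≤ 2 ^ 𝔠) :
    Nonempty (X × Bool ↪ Set (Set ℕ)) := by
  have hcard : #(X × Bool) = #X := by
    have two_le : (2 : Cardinal) ≤ #X := (natCast_lt_aleph0 (n := 2)).le.trans (aleph0_le_mk X)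
    simpa using mul_eq_left (aleph0_le_mk X) two_le two_ne_zero
  rw [← lift_mk_le', hcard]
  simpa using hX

/- The point `x` codes a pair of injective sequences `c x`, and `N x` makes `x` a cluster point of
both. -/
theorem exists_isSAUFilterSystem {X : Type u} [Nontrivial X] (hX : #X ^ ℵ₀ = #X)
    (hX' : #X ≤ 2 ^ 𝔠) : ∃ N : X → Filter X, IsSAUFilterSystem N := by
  have : Infinite X := infinite_of_power_aleph0_eq hX
  obtain ⟨φ⟩ := nonempty_prod_bool_embedding hX'
  obtain ⟨F, hFbot, hFcof, hFsep⟩ := exists_filters_separatedOn_map φ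
  obtain ⟨code⟩ : Nonempty ((Bool → ℕ ↪ X) ↪ X) := mk_bool_arrow_embedding_le hX
  have : Nonempty (ℕ ↪ X) := ⟨Infinite.natEmbedding X⟩
  let c : X → Bool → ℕ ↪ X := invFun code
  have hc : Surjective c := invFun_surjective code.injective
  let l (p : X × Bool) : Filter X := map (c p.1 p.2) (F p)
  have frequently_mem {x b} {G : Set X} (h : ∀ n, c x b n ∈ G) :
      ∃ᶠ y in ⨆ b, l (x, b), y ∈ G :=
    have : (l (x, b)).NeBot := (hFbot _).map _
    have hl : ∀ᶠ y in l (x, b), y ∈ G := eventually_map.2 (.of_forall h)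
    hl.frequently.filter_mono (le_iSup (fun b => l (x, b)) b)
  refine ⟨fun x => ⨆ b, l (x, b), fun x => ?_, fun x => iSup_le fun b => ?_, fun x => ?_,
    fun s hs => .iSup ?_, fun G H hG hH => ?_⟩
  · exact iSup_neBot.2 ⟨true, (hFbot _).map _⟩
  · exact (c x b).injective.tendsto_cofinite.mono_left (hFcof _)
  · exact ⟨⋃ b, range (c x b), mem_iSup.2 fun b => mem_of_superset range_mem_map
      (subset_iUnion (fun b => range (c x b)) b), countable_iUnion fun b => countable_range _⟩
  · have hcount : (s ×ˢ Set.univ : Set (X × Bool)).Countable := hs.prod countable_univ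
    exact separatedOn_map_embedding hcount (hFsep _ hcount) fun p => c p.1 p.2
  · let seqIn {A : Set X} (hA : A.Infinite) : ℕ ↪ X := (hA.natEmbedding A).trans (.subtype _)
    have seqIn_mem {A : Set X} (hA : A.Infinite) (n : ℕ) : seqIn hA n ∈ A :=
      (hA.natEmbedding A n).2
    obtain ⟨x, hx⟩ := hc fun b => bif b then seqIn hG else seqIn hH
    exact ⟨x, frequently_mem (b := true) (by simpa only [hx, cond_true] using seqIn_mem hG),
      frequently_mem (b := false) (by simpa only [hx, cond_false] using seqIn_mem hH)⟩

end Construction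

end SAU

/-- for `𝔠 ≤ κ ≤ 2^𝔠`, there is a locally countable SAU space of
cardinality `κ` iff `κ^ω = κ`. -/
theorem stmt16 (κ : Cardinal.{0}) (h1 : Cardinal.continuum ≤ κ)
    (h2 : κ ≤ 2 ^ Cardinal.continuum) :
    (∃ (X : Type) (_ : TopologicalSpace X),
        IsSAU X ∧ (∀ x : X, ∃ U ∈ nhds x, U.Countable) ∧ #X = κ) ↔
      κ ^ ℵ₀ = κ := by
  constructor
  · rintro ⟨X, _, hX, hc, rfl⟩
    have := hX.1
    have := hX.countablyCompactSpace
    exact SAU.mk_power_aleph0_eq_of_countablyCompactSpace hc h1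
  · intro hκ
    induction κ using Cardinal.inductionOn with | _ X
    have : Nontrivial X := one_lt_iff_nontrivial.1 ((nat_lt_continuum 1).trans_le h1)
    obtain ⟨N, hN⟩ := SAU.exists_isSAUFilterSystem hκ h2
    exact ⟨X, .mkOfNhds N, hN.isSAU, hN.exists_countable_mem_nhds, rfl⟩
end
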